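/- arXiv:math/9201217 — 11 statements merged into one kernel-verified Lean document; each statement's English description precedes it below -/
import Mathlib

section
/- Suppose the unit vectors u_1,…,u_m and positive weights c_1,…,c_m satisfy John's conditions, and let K = {x ∈ ℝ^n : ⟨x, u_i⟩ ≤ 1 for all i}. If E is the ellipsoid {x ∈ ℝ^n : Σ_{j=1}^n α_j^{-2} ⟨x−y, v_j⟩² ≤ 1}, for a point y ∈ ℝ^n, an orthonormal basis (v_j)_{j=1}^n of ℝ^n and positive reals (α_j)_{j=1}^n, and E ⊆ K, then ∏_{j=1}^n α_j ≤ 1. -/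
open Finset RealInnerProductSpace

/-!
The point `y + T (u i)`, where `T` is the positive operator with eigenvectors `v j` and eigenvalues
`α j`, lies in the ellipsoid, so `⟪y, u i⟫ + ∑ j, α j * ⟪u i, v j⟫ ^ 2 ≤ 1`. Averaging these
inequalities with the weights `c i`, the first term vanishes by the centring condition, and the
decomposition of the identity gives `∑ i, c i * ⟪u i, v j⟫ ^ 2 = 1` and `∑ i, c i = n`. Hence
`∑ j, α j ≤ n`, and the arithmetic-geometric mean inequality, here in the form
`∏ α j ≤ ∏ exp (α j - 1) = exp (∑ α j - n)`, finishes the proof.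
-/

/-- The 'if' part of John's theorem (Proposition 1, inequality part):
if the unit vectors `u i` and positive weights `c i` satisfy John's conditions,
and the ellipsoid `E` (with semi-axes `α j` along the orthonormal basis `v`,
centred at `y`) is contained in `K = {x : ⟪x, u i⟫ ≤ 1 ∀ i}`, then `∏ j, α j ≤ 1`. -/
theorem stmt_0 {n m : ℕ} (hn : 1 ≤ n) (hm : 1 ≤ m)
    (u : Fin m → EuclideanSpace ℝ (Fin n)) (c : Fin m → ℝ)
    (hu : ∀ i, ‖u i‖ = 1) (hc : ∀ i, 0 < c i)
    (ha : ∑ i, c i • u i = 0)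
    (hb : ∀ x : EuclideanSpace ℝ (Fin n), ∑ i, (c i * ⟪u i, x⟫) • u i = x)
    (y : EuclideanSpace ℝ (Fin n))
    (v : OrthonormalBasis (Fin n) ℝ (EuclideanSpace ℝ (Fin n)))
    (α : Fin n → ℝ) (hα : ∀ j, 0 < α j)
    (hEK : {x : EuclideanSpace ℝ (Fin n) |
        ∑ j, ((α j) ^ 2)⁻¹ * ⟪x - y, v j⟫ ^ 2 ≤ 1} ⊆
      {x : EuclideanSpace ℝ (Fin n) | ∀ i, ⟪x, u i⟫ ≤ 1}) :
    ∏ j, α j ≤ 1 := by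
  have hpars : ∀ i, ∑ j, ⟪u i, v j⟫ ^ 2 = 1 := by
    intro i
    have h := v.sum_sq_norm_inner_left (u i)
    simpa [hu i] using h
  have hv : ∀ j, ∑ i, c i * ⟪u i, v j⟫ ^ 2 = 1 := by
    intro j
    have h := congrArg (fun x => ⟪x, v j⟫) (hb (v j))
    simp only [sum_inner, real_inner_smul_left, real_inner_self_eq_norm_sq,
      v.norm_eq_one] at h
    rw [one_pow] at h
    rw [← h]
    exact Finset.sum_congr rfl fun i _ => by ring
  have hcn : ∑ i, c i = n := by
    calc ∑ i, c i = ∑ i, ∑ j, c i * ⟪u i, v j⟫ ^ 2 := by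
          refine Finset.sum_congr rfl fun i _ => ?_
          rw [← Finset.mul_sum, hpars, mul_one]
      _ = ∑ j, ∑ i, c i * ⟪u i, v j⟫ ^ 2 := Finset.sum_comm
      _ = n := by simp [hv]
  have hy : ∑ i, c i * ⟪y, u i⟫ = 0 := by
    have h := congrArg (fun x => ⟪y, x⟫) ha
    simpa [inner_sum, real_inner_smul_right] using h
  have hpt : ∀ i, ⟪y, u i⟫ + ∑ j, α j * ⟪u i, v j⟫ ^ 2 ≤ 1 := by
    intro i
    have hmem : y + ∑ j, (α j * ⟪u i, v j⟫) • v j ∈ {x : EuclideanSpace ℝ (Fin n) |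
        ∑ j, ((α j) ^ 2)⁻¹ * ⟪x - y, v j⟫ ^ 2 ≤ 1} := by
      rw [Set.mem_setOf_eq, add_sub_cancel_left, ← hpars i]
      refine (Finset.sum_congr rfl fun j _ => ?_).le
      have hin : ⟪∑ k, (α k * ⟪u i, v k⟫) • v k, v j⟫ = α j * ⟪u i, v j⟫ := by
        simp [sum_inner, real_inner_smul_left, v.inner_eq_ite]
      have := (hα j).ne'
      rw [hin]
      field_simp
    have h := hEK hmem i
    rw [inner_add_left, sum_inner] at h
    refine le_trans (le_of_eq ?_) h
    congr 1
    refine Finset.sum_congr rfl fun j _ => ?_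
    rw [real_inner_smul_left, real_inner_comm (v j) (u i)]
    ring
  have hsum : ∑ j, α j ≤ n := by
    calc ∑ j, α j = ∑ j, α j * ∑ i, c i * ⟪u i, v j⟫ ^ 2 := by simp [hv]
      _ = ∑ i, c i * ∑ j, α j * ⟪u i, v j⟫ ^ 2 := by
          simp only [Finset.mul_sum]
          rw [Finset.sum_comm]
          exact Finset.sum_congr rfl fun i _ => Finset.sum_congr rfl fun j _ => by ring
      _ = ∑ i, c i * (⟪y, u i⟫ + ∑ j, α j * ⟪u i, v j⟫ ^ 2) := by
          simp only [mul_add, Finset.sum_add_distrib, hy, zero_add]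
      _ ≤ ∑ i, c i * 1 :=
          Finset.sum_le_sum fun i _ => mul_le_mul_of_nonneg_left (hpt i) (hc i).le
      _ = n := by simp [hcn]
  calc ∏ j, α j ≤ ∏ j, Real.exp (α j - 1) :=
        Finset.prod_le_prod (fun j _ => (hα j).le) fun j _ => by
          linarith [Real.add_one_le_exp (α j - 1)]
    _ = Real.exp (∑ j, α j - n) := by
        rw [← Real.exp_sum, Finset.sum_sub_distrib]
        simp
    _ ≤ 1 := Real.exp_le_one_iff.mpr (by linarith)
end

section
/- Suppose the unit vectors u_1,…,u_m and positive weights c_1,…,c_m satisfy John's conditions, and let K = {x ∈ ℝ^n : ⟨x, u_i⟩ ≤ 1 for all i}. If E is the ellipsoid {x ∈ ℝ^n : Σ_{j=1}^n α_j^{-2} ⟨x−y, v_j⟩² ≤ 1}, for a point y ∈ ℝ^n, an orthonormal basis (v_j)_{j=1}^n of ℝ^n and positive reals (α_j)_{j=1}^n, and E ⊆ K with ∏_{j=1}^n α_j = 1, then α_j = 1 for all j and y = 0; that is, the Euclidean unit ball is the unique ellipsoid of maximal volume contained in K. -/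
/-!
For each `i` the point `y + ∑ j, α j ⟪u i, v j⟫ v j` (the point of the ellipsoid obtained from
the point `u i` of the unit sphere) lies in `E ⊆ K`; testing it against `u i` gives
`⟪y, u i⟫ + ∑ j, α j ⟪u i, v j⟫² ≤ 1 = ∑ j, ⟪u i, v j⟫²`. Summing with weights `c i`, John's
conditions `∑ c i • u i = 0` and `∑ i, c i ⟪u i, v j⟫² = ‖v j‖² = 1` turn this into
`∑ j, (α j - 1) ≤ 0`. As `log t ≤ t - 1` with equality only at `t = 1`, and `∑ log α j = 0`,
every `α j` is `1`. The inequality for `i` then reads `⟪y, u i⟫ ≤ 0`; the weighted sum of these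
numbers vanishes, so each of them is `0`, and the decomposition of the identity gives `y = 0`.
-/

open Finset RealInnerProductSpace

/-- Equality case of the AM-GM inequality, in the form used for the semi-axes. -/
lemma eq_one_of_prod_eq_one_of_sum_le {ι : Type*} [Fintype ι] (α : ι → ℝ) (hα : ∀ j, 0 < α j)
    (hprod : ∏ j, α j = 1) (hsum : ∑ j, (α j - 1) ≤ 0) (j : ι) : α j = 1 := by
  have hlog : ∑ j, Real.log (α j) = 0 := by
    rw [← Real.log_prod (fun j _ => (hα j).ne'), hprod, Real.log_one]
  have hnonneg : ∀ j ∈ univ, 0 ≤ α j - 1 - Real.log (α j) := fun j _ => by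
    linarith [Real.log_le_sub_one_of_pos (hα j)]
  have hzero : ∑ j, (α j - 1 - Real.log (α j)) = 0 := by
    refine le_antisymm ?_ (sum_nonneg hnonneg)
    rw [sum_sub_distrib, hlog]
    linarith
  have hj := (sum_eq_zero_iff_of_nonneg hnonneg).1 hzero j (mem_univ j)
  by_contra hne
  linarith [Real.log_lt_sub_one_of_pos (hα j) hne]

/-- The 'if' part of John's theorem (Proposition 1, equality/uniqueness part):
under John's conditions, if the ellipsoid `E ⊆ K` has `∏ j, α j = 1`,
then `α j = 1` for every `j` and the centre `y` is `0`;
i.e. the unit ball is the unique ellipsoid of maximal volume in `K`. -/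
theorem stmt_1 {n m : ℕ} (hn : 1 ≤ n) (hm : 1 ≤ m)
    (u : Fin m → EuclideanSpace ℝ (Fin n)) (c : Fin m → ℝ)
    (hu : ∀ i, ‖u i‖ = 1) (hc : ∀ i, 0 < c i)
    (ha : ∑ i, c i • u i = 0)
    (hb : ∀ x : EuclideanSpace ℝ (Fin n), ∑ i, (c i * ⟪u i, x⟫) • u i = x)
    (y : EuclideanSpace ℝ (Fin n))
    (v : OrthonormalBasis (Fin n) ℝ (EuclideanSpace ℝ (Fin n)))
    (α : Fin n → ℝ) (hα : ∀ j, 0 < α j)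
    (hEK : {x : EuclideanSpace ℝ (Fin n) |
        ∑ j, ((α j) ^ 2)⁻¹ * ⟪x - y, v j⟫ ^ 2 ≤ 1} ⊆
      {x : EuclideanSpace ℝ (Fin n) | ∀ i, ⟪x, u i⟫ ≤ 1})
    (hprod : ∏ j, α j = 1) :
    (∀ j, α j = 1) ∧ y = 0 := by
  -- Parseval for `u i` in the basis `v`
  have hpars : ∀ i, ∑ j, ⟪u i, v j⟫ ^ 2 = 1 := fun i => by
    have h := v.sum_sq_norm_inner_left (u i)
    simpa [hu i] using h
  have htest : ∀ i, ⟪y, u i⟫ + ∑ j, α j * ⟪u i, v j⟫ ^ 2 ≤ 1 := fun i => by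
    have hmem := @hEK (y + ∑ j, (α j * ⟪u i, v j⟫) • v j) (by
      have hcoord : ∀ k, ⟪∑ j, (α j * ⟪u i, v j⟫) • v j, v k⟫ = α k * ⟪u i, v k⟫ := fun k => by
        simp [sum_inner, real_inner_smul_left, v.inner_eq_ite]
      simp only [Set.mem_setOf_eq, add_sub_cancel_left, hcoord]
      refine le_of_eq (Eq.trans (sum_congr rfl fun j _ => ?_) (hpars i))
      have := (hα j).ne'
      field_simp) i
    refine le_of_eq_of_le ?_ hmem
    rw [inner_add_left, sum_inner]
    congr 1
    refine sum_congr rfl fun j _ => ?_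
    rw [real_inner_smul_left, real_inner_comm (u i) (v j)]
    ring
  have hcentre : ∑ i, c i * ⟪y, u i⟫ = 0 := by
    have h := congrArg (fun z => ⟪y, z⟫) ha
    simpa [inner_sum, real_inner_smul_right] using h
  have hid : ∀ j, ∑ i, c i * ⟪u i, v j⟫ ^ 2 = 1 := fun j => by
    have h := congrArg (fun z => ⟪z, v j⟫) (hb (v j))
    simp only [sum_inner, real_inner_smul_left, real_inner_self_eq_norm_sq, v.norm_eq_one,
      one_pow] at h
    rw [← h]
    exact sum_congr rfl fun i _ => by ring
  have hsum : ∑ j, (α j - 1) ≤ 0 := by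
    calc ∑ j, (α j - 1) = ∑ j, (α j - 1) * ∑ i, c i * ⟪u i, v j⟫ ^ 2 := by simp [hid]
      _ = ∑ i, c i * ∑ j, (α j - 1) * ⟪u i, v j⟫ ^ 2 := by
        simp only [mul_sum]
        rw [sum_comm]
        exact sum_congr rfl fun i _ => sum_congr rfl fun j _ => by ring
      _ ≤ ∑ i, c i * -⟪y, u i⟫ := by
        refine sum_le_sum fun i _ => mul_le_mul_of_nonneg_left ?_ (hc i).le
        simp only [sub_mul, one_mul, sum_sub_distrib, hpars i]
        linarith [htest i]
      _ = 0 := by simp [hcentre]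
  have hone := eq_one_of_prod_eq_one_of_sum_le α hα hprod hsum
  refine ⟨hone, ?_⟩
  have hle : ∀ i ∈ univ, c i * ⟪y, u i⟫ ≤ 0 := fun i _ => by
    have h := htest i
    simp only [hone, one_mul, hpars i] at h
    exact mul_nonpos_of_nonneg_of_nonpos (hc i).le (by linarith)
  have hzero := (sum_eq_zero_iff_of_nonpos hle).1 hcentre
  rw [← hb y]
  refine sum_eq_zero fun i hi => ?_
  rw [real_inner_comm, hzero i hi, zero_smul]
end

section
/- Suppose the unit vectors u_1,…,u_m and positive weights c_1,…,c_m satisfy John's conditions, and let K = {x ∈ ℝ^n : ⟨x, u_i⟩ ≤ 1 for all i}. Then every x ∈ K satisfies ‖x‖ ≤ n; that is, K is contained in the Euclidean ball of radius n centred at the origin. -/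
/-!
Write `r = ‖x‖` and `tᵢ = ⟪x, uᵢ⟫`. Cauchy–Schwarz and membership in `K` give `-r ≤ tᵢ ≤ 1`, so
`0 ≤ ∑ cᵢ (1 - tᵢ) (tᵢ + r)`. John's conditions give `∑ cᵢ tᵢ = 0` and `∑ cᵢ tᵢ² = r²`, and taking
the trace of the decomposition of the identity gives `∑ cᵢ = n` (`sum_weights_eq_dim`). The sum is
therefore `n r - r²`, whence `r ≤ n`.
-/

open Finset RealInnerProductSpace

/-- The trace of a decomposition of the identity `∑ cᵢ uᵢ ⊗ uᵢ = Iₙ` into unit vectors. -/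
lemma sum_weights_eq_dim {n m : ℕ}
    (u : Fin m → EuclideanSpace ℝ (Fin n)) (c : Fin m → ℝ) (hu : ∀ i, ‖u i‖ = 1)
    (hb : ∀ x : EuclideanSpace ℝ (Fin n), ∑ i, (c i * ⟪u i, x⟫) • u i = x) :
    ∑ i, c i = n := by
  have hdiag : ∀ j : Fin n, ∑ i, c i * (u i j) ^ 2 = 1 := by
    intro j
    have h := congrArg (fun y : EuclideanSpace ℝ (Fin n) => y j)
      (hb (EuclideanSpace.single j 1))
    simpa [EuclideanSpace.inner_single_right, pow_two, mul_assoc] using h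
  have hnorm : ∀ i, ∑ j, (u i j) ^ 2 = 1 := by
    intro i
    rw [← EuclideanSpace.real_norm_sq_eq, hu, one_pow]
  calc ∑ i, c i = ∑ i, ∑ j, c i * (u i j) ^ 2 := by
        simp [← Finset.mul_sum, hnorm]
    _ = ∑ j : Fin n, ∑ i, c i * (u i j) ^ 2 := Finset.sum_comm
    _ = n := by simp [hdiag]

/-- Under John's conditions, the set `K = {x : ⟪x, u i⟫ ≤ 1 ∀ i}` is
contained in the Euclidean ball of radius `n` about the origin. -/
theorem stmt_4 {n m : ℕ} (hn : 1 ≤ n) (hm : 1 ≤ m)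
    (u : Fin m → EuclideanSpace ℝ (Fin n)) (c : Fin m → ℝ)
    (hu : ∀ i, ‖u i‖ = 1) (hc : ∀ i, 0 < c i)
    (ha : ∑ i, c i • u i = 0)
    (hb : ∀ x : EuclideanSpace ℝ (Fin n), ∑ i, (c i * ⟪u i, x⟫) • u i = x)
    (x : EuclideanSpace ℝ (Fin n)) (hx : ∀ i, ⟪x, u i⟫ ≤ 1) :
    ‖x‖ ≤ n := by
  have h0 : ∑ i, c i = n := sum_weights_eq_dim u c hu hb
  have h1 : ∑ i, c i * ⟪x, u i⟫ = 0 := by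
    have h := congrArg (fun y => ⟪x, y⟫) ha
    simpa [inner_sum, inner_smul_right] using h
  have h2 : ∑ i, c i * ⟪x, u i⟫ ^ 2 = ‖x‖ ^ 2 := by
    have h := congrArg (fun y => ⟪x, y⟫) (hb x)
    simp only [inner_sum, inner_smul_right, real_inner_self_eq_norm_sq] at h
    rw [← h]
    refine Finset.sum_congr rfl fun i _ => ?_
    rw [real_inner_comm x (u i)]
    ring
  have hnonneg : 0 ≤ ∑ i, c i * ((1 - ⟪x, u i⟫) * (⟪x, u i⟫ + ‖x‖)) := by
    refine Finset.sum_nonneg fun i _ => mul_nonneg (hc i).le (mul_nonneg ?_ ?_)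
    · linarith [hx i]
    · have h := neg_le_of_abs_le (abs_real_inner_le_norm x (u i))
      rw [hu i, mul_one] at h
      linarith
  have hexpand : ∑ i, c i * ((1 - ⟪x, u i⟫) * (⟪x, u i⟫ + ‖x‖))
      = ‖x‖ * ∑ i, c i + (1 - ‖x‖) * ∑ i, c i * ⟪x, u i⟫ - ∑ i, c i * ⟪x, u i⟫ ^ 2 := by
    rw [Finset.mul_sum, Finset.mul_sum, ← Finset.sum_add_distrib, ← Finset.sum_sub_distrib]
    exact Finset.sum_congr rfl fun i _ => by ring
  rw [hexpand, h0, h1, h2] at hnonneg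
  by_contra! hlt
  have hn0 : (0 : ℝ) ≤ n := Nat.cast_nonneg n
  nlinarith
end

section
/- Let x_1,…,x_m be points in ℝ^k (k ≥ 1, m ≥ 1) with ‖x_i − x_j‖ ≤ d for all i, j. Then there exists a point x ∈ ℝ^k such that ‖x_i − x‖ ≤ d · √(k / (2(k+1))) for all i. -/
/-!
For `n` points the concave quadratic
`w ↦ ∑ wᵢ ‖xᵢ‖² - ‖∑ wᵢ xᵢ‖² = ½ ∑ᵢⱼ wᵢ wⱼ ‖xᵢ - xⱼ‖²` attains its maximum `M` on the standard
simplex. Moving a maximizer `w` towards a vertex shows that every `xⱼ` lies within `√M` of the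
barycentre `∑ wᵢ xᵢ` (`norm_sub_sq_le_weightedVariance`), while `M ≤ ½ d² (1 - ∑ wᵢ²)` and
`∑ wᵢ² ≥ 1 / n` by Cauchy-Schwarz (`weightedVariance_le`). This gives the bound for at most `k + 1`
points, and Helly's theorem applied to the closed balls of the required radius around the points
extends it to any finite number of points in dimension `k`.
-/

open Finset RealInnerProductSpace

section Jung

variable {ι E : Type*} [Fintype ι] [NormedAddCommGroup E] [InnerProductSpace ℝ E]

/-- The variance of the points `x i` with respect to weights `w` (of total mass one), written as the
mean of the squared norms minus squared norm of the mean. -/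
noncomputable def weightedVariance (x : ι → E) (w : ι → ℝ) : ℝ :=
  ∑ i, w i * ‖x i‖ ^ 2 - ‖∑ i, w i • x i‖ ^ 2

lemma weightedVariance_eq_sum_dist (x : ι → E) (w : ι → ℝ) (hw : ∑ i, w i = 1) :
    weightedVariance x w = (∑ i, ∑ j, w i * w j * ‖x i - x j‖ ^ 2) / 2 := by
  have h1 : ‖∑ i, w i • x i‖ ^ 2 = ∑ i, ∑ j, w i * w j * ⟪x i, x j⟫ := by
    rw [← real_inner_self_eq_norm_sq, sum_inner]
    refine sum_congr rfl fun i _ => ?_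
    rw [inner_sum]
    refine sum_congr rfl fun j _ => ?_
    rw [real_inner_smul_left, real_inner_smul_right]
    ring
  have h2 : ∑ i, ∑ j, w i * w j * ‖x i‖ ^ 2 = ∑ i, w i * ‖x i‖ ^ 2 := by
    refine sum_congr rfl fun i _ => ?_
    rw [← sum_mul, ← mul_sum, hw, mul_one]
  have h3 : ∑ i, ∑ j, w i * w j * ‖x j‖ ^ 2 = ∑ i, w i * ‖x i‖ ^ 2 := by
    rw [sum_comm, ← h2]
    refine sum_congr rfl fun i _ => sum_congr rfl fun j _ => ?_
    ring
  have h4 : ∑ i, ∑ j, w i * w j * ‖x i - x j‖ ^ 2 =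
      ∑ i, ∑ j, w i * w j * ‖x i‖ ^ 2 + ∑ i, ∑ j, w i * w j * ‖x j‖ ^ 2
        - 2 * ∑ i, ∑ j, w i * w j * ⟪x i, x j⟫ := by
    simp only [mul_sum, ← sum_add_distrib, ← sum_sub_distrib]
    refine sum_congr rfl fun i _ => sum_congr rfl fun j _ => ?_
    rw [norm_sub_sq_real]
    ring
  rw [weightedVariance, h4, h1, h2, h3]
  ring

/-- The diagonal terms `i = j` contribute nothing to the variance, which gains the factor
`1 - ∑ wᵢ² ≤ 1 - 1 / n` over the trivial bound `d² / 2`. -/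
lemma weightedVariance_le {x : ι → E} {w : ι → ℝ} (hw : w ∈ stdSimplex ℝ ι) {d : ℝ}
    (hd : ∀ i j, ‖x i - x j‖ ≤ d) :
    weightedVariance x w ≤ d ^ 2 / 2 * (1 - 1 / Fintype.card ι) := by
  classical
  obtain ⟨hw0, hw1⟩ := hw
  have hne : Nonempty ι := by
    by_contra h
    rw [not_nonempty_iff] at h
    simp at hw1
  have hn : (0 : ℝ) < Fintype.card ι := by exact_mod_cast Fintype.card_pos
  have hcs : 1 ≤ Fintype.card ι * ∑ i, w i ^ 2 := by
    have := sq_sum_le_card_mul_sum_sq (s := univ) (f := w)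
    rw [hw1] at this
    simpa using this
  have hcs' : 1 / (Fintype.card ι : ℝ) ≤ ∑ i, w i ^ 2 := by
    rw [div_le_iff₀ hn]
    linarith
  have hterm : ∀ i j, w i * w j * ‖x i - x j‖ ^ 2 ≤
      d ^ 2 * (w i * w j) - if i = j then d ^ 2 * w i ^ 2 else 0 := by
    intro i j
    split_ifs with h
    · subst h
      simp [sq]
    · have h1 : ‖x i - x j‖ ^ 2 ≤ d ^ 2 := pow_le_pow_left₀ (norm_nonneg _) (hd i j) 2
      have h2 := mul_le_mul_of_nonneg_left h1 (mul_nonneg (hw0 i) (hw0 j))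
      linarith
  have hsum : ∑ i, ∑ j, w i * w j * ‖x i - x j‖ ^ 2 ≤ d ^ 2 * (1 - ∑ i, w i ^ 2) := by
    refine (sum_le_sum fun i _ => sum_le_sum fun j _ => hterm i j).trans_eq ?_
    simp only [sum_sub_distrib, sum_ite_eq, mem_univ, if_true, ← mul_sum, hw1, mul_one]
    ring
  rw [weightedVariance_eq_sum_dist x w hw1]
  nlinarith [sq_nonneg d]

lemma weightedVariance_lineMap_single [DecidableEq ι] (x : ι → E) (w : ι → ℝ) (j : ι) (t : ℝ) :
    weightedVariance x ((1 - t) • w + t • Pi.single j 1) =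
      (1 - t) * weightedVariance x w + t * (1 - t) * ‖x j - ∑ i, w i • x i‖ ^ 2 := by
  have h1 : ∑ i, ((1 - t) • w + t • Pi.single j 1 : ι → ℝ) i * ‖x i‖ ^ 2 =
      (1 - t) * ∑ i, w i * ‖x i‖ ^ 2 + t * ‖x j‖ ^ 2 := by
    simp [add_mul, sum_add_distrib, mul_sum, Pi.single_apply, mul_assoc]
  have h2 : ∑ i, ((1 - t) • w + t • Pi.single j 1 : ι → ℝ) i • x i =
      (1 - t) • ∑ i, w i • x i + t • x j := by
    simp [add_smul, sum_add_distrib, smul_sum, Pi.single_apply, mul_smul]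
  rw [weightedVariance, weightedVariance, h1, h2, norm_add_sq_real, norm_sub_sq_real,
    norm_smul, norm_smul, real_inner_smul_left, real_inner_smul_right, mul_pow, mul_pow,
    real_inner_comm (x j), Real.norm_eq_abs, Real.norm_eq_abs, sq_abs, sq_abs]
  ring

/-- First-order optimality: at a maximizer of the variance on the simplex, the variance bounds
the squared distance of every point from the barycentre. -/
lemma norm_sub_sq_le_weightedVariance {x : ι → E} {w : ι → ℝ} (hw : w ∈ stdSimplex ℝ ι)
    (hmax : IsMaxOn (weightedVariance x) (stdSimplex ℝ ι) w) (j : ι) :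
    ‖x j - ∑ i, w i • x i‖ ^ 2 ≤ weightedVariance x w := by
  classical
  set D := ‖x j - ∑ i, w i • x i‖ ^ 2 with hD
  have key : ∀ t : ℝ, 0 < t → t ≤ 1 → (1 - t) * D ≤ weightedVariance x w := by
    intro t ht ht1
    have hmem : (1 - t) • w + t • Pi.single j 1 ∈ stdSimplex ℝ ι :=
      convex_stdSimplex ℝ ι hw (single_mem_stdSimplex ℝ j) (by linarith) ht.le (by ring)
    have h := isMaxOn_iff.mp hmax _ hmem
    rw [weightedVariance_lineMap_single, ← hD] at h
    have h' : t * ((1 - t) * D) ≤ t * weightedVariance x w := by linarith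
    exact le_of_mul_le_mul_left h' ht
  have hlim : Filter.Tendsto (fun t : ℝ => (1 - t) * D) (nhdsWithin 0 (Set.Ioi 0)) (nhds D) := by
    have hc : Continuous fun t : ℝ => (1 - t) * D := by fun_prop
    have := (hc.tendsto 0).mono_left (nhdsWithin_le_nhds (s := Set.Ioi 0))
    simpa using this
  refine le_of_tendsto hlim ?_
  filter_upwards [Ioc_mem_nhdsGT (zero_lt_one' ℝ)] with t ht
  exact key t ht.1 ht.2

/-- Jung's bound for `n` points, in any real inner product space. -/
lemma exists_norm_sub_sq_le [Nonempty ι] {x : ι → E} {d : ℝ} (hd : ∀ i j, ‖x i - x j‖ ≤ d) :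
    ∃ z, ∀ i, ‖x i - z‖ ^ 2 ≤ d ^ 2 / 2 * (1 - 1 / Fintype.card ι) := by
  classical
  have hcont : Continuous (weightedVariance x) := by
    unfold weightedVariance
    fun_prop
  obtain ⟨w, hw, hmax⟩ := (isCompact_stdSimplex ℝ ι).exists_isMaxOn
    ⟨_, single_mem_stdSimplex ℝ (Classical.arbitrary ι)⟩ hcont.continuousOn
  exact ⟨_, fun i => (norm_sub_sq_le_weightedVariance hw hmax i).trans (weightedVariance_le hw hd)⟩

end Jung

/-- Lemma 3 (Jung-type bound via Caratheodory): a finite set of points in `ℝ^k`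
of diameter at most `d` is contained in a ball of radius `d * √(k / (2(k+1)))`. -/
theorem stmt_5 {k m : ℕ} (hk : 1 ≤ k) (hm : 1 ≤ m)
    (x : Fin m → EuclideanSpace ℝ (Fin k)) (d : ℝ) (hd : 0 ≤ d)
    (hdiam : ∀ i j, ‖x i - x j‖ ≤ d) :
    ∃ z : EuclideanSpace ℝ (Fin k),
      ∀ i, ‖x i - z‖ ≤ d * Real.sqrt (k / (2 * (k + 1))) := by
  set r := d * Real.sqrt (k / (2 * (k + 1))) with hr
  have hr0 : 0 ≤ r := by positivity
  have hr2 : r ^ 2 = d ^ 2 / 2 * (1 - 1 / (k + 1)) := by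
    rw [hr, mul_pow, Real.sq_sqrt (by positivity)]
    field_simp
    ring
  have helly : (⋂ i ∈ (univ : Finset (Fin m)), Metric.closedBall (x i) r).Nonempty := by
    refine Convex.helly_theorem' (𝕜 := ℝ) (fun i _ => convex_closedBall _ _) fun I _ hI => ?_
    rw [finrank_euclideanSpace_fin] at hI
    rcases I.eq_empty_or_nonempty with rfl | hne
    · simp
    have : Nonempty I := hne.to_subtype
    obtain ⟨z, hz⟩ := exists_norm_sub_sq_le (x := fun i : I => x i) fun i j => hdiam i j
    refine ⟨z, Set.mem_iInter₂.mpr fun i hi => ?_⟩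
    rw [Metric.mem_closedBall, dist_comm, dist_eq_norm]
    refine abs_le_of_sq_le_sq' ((hz ⟨i, hi⟩).trans ?_) hr0 |>.2
    rw [hr2, Fintype.card_coe]
    have hpos : (0 : ℝ) < #I := by exact_mod_cast hne.card_pos
    have hle : (#I : ℝ) ≤ k + 1 := by exact_mod_cast hI
    gcongr
  obtain ⟨z, hz⟩ := helly
  refine ⟨z, fun i => ?_⟩
  have := Set.mem_iInter₂.mp hz i (mem_univ i)
  rwa [Metric.mem_closedBall, dist_comm, dist_eq_norm] at this
end

section
/- Let T ⊂ ℝ^n be a regular solid simplex of internal radius 1, given as T = {x ∈ ℝ^n : ⟨x, u_i⟩ ≤ 1, 1 ≤ i ≤ n+1} where the u_i satisfy the regular-simplex conditions. Let 1 ≤ k ≤ n−1, and suppose a k-dimensional Euclidean ball E = {x ∈ ℝ^n : Σ_{j=1}^k ⟨x−y, v_j⟩² ≤ r², and ⟨x−y, v_j⟩ = 0 for k+1 ≤ j ≤ n}, for some y ∈ ℝ^n, r > 0 and orthonormal basis (v_j)_{j=1}^n, is contained in T. Then r ≤ √(n(n+1)/(k(k+1))). -/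
/-!
Let `w i` be the orthogonal projection of `u i` onto the span of `v j`, `j < k`, and put
`a i = ‖w i‖`, `S = ∑ a i`, `K = (n+1)/n`. The ball lies in the half-space `⟪x, u i⟫ ≤ 1` exactly
when `⟪y, u i⟫ + r * a i ≤ 1`; summing over `i` gives `r * S ≤ n + 1`, so it suffices to prove
`K * k * (k+1) ≤ S²` (`frame_sum_norm`).

The vectors `w i` satisfy `∑ w i = 0`, `∑ j, ⟪w i, w j⟫² = K * (a i)²` and `∑ (a i)² = K * k`.
Cauchy–Schwarz with weights `a j`, applied to `(a i)² = -∑_{j ≠ i} ⟪w i, w j⟫`, gives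
`(a i)³ * S ≤ (S - a i) * ∑ j, ⟪w i, w j⟫² / a j`. Dividing by `S - a i` and summing over `i`
yields `∑ (a i)³ / (S - a i) ≤ K`. A second Cauchy–Schwarz, applied to
`(a i)² = √((a i)³ / (S - a i)) * √(a i * (S - a i))`, gives `(K * k)² ≤ K * (S² - K * k)`,
which is the claim.
-/

open Finset RealInnerProductSpace

/-- The weighted Cauchy–Schwarz step. Indices with `w j = 0` are harmless, as then the numerator of
the junk quotient vanishes too. -/
lemma frame_row {ι E : Type*} [Fintype ι] [NormedAddCommGroup E]
    [InnerProductSpace ℝ E] (w : ι → E) (h0 : ∑ i, w i = 0) (i : ι) :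
    ‖w i‖ ^ 3 * (∑ j, ‖w j‖) ≤
      ((∑ j, ‖w j‖) - ‖w i‖) * ∑ j, ⟪w i, w j⟫ ^ 2 / ‖w j‖ := by
  classical
  have hrow : ∑ j, ⟪w i, w j⟫ = 0 := by rw [← inner_sum, h0, inner_zero_right]
  have e0 := Finset.add_sum_erase Finset.univ (fun j => ⟪w i, w j⟫) (Finset.mem_univ i)
  have e1 := Finset.add_sum_erase Finset.univ (fun j => ‖w j‖) (Finset.mem_univ i)
  have e2 := Finset.add_sum_erase Finset.univ (fun j => ⟪w i, w j⟫ ^ 2 / ‖w j‖)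
    (Finset.mem_univ i)
  have cs := Finset.sum_sq_le_sum_mul_sum_of_sq_le_mul (Finset.univ.erase i)
    (f := fun j => ‖w j‖) (g := fun j => ⟪w i, w j⟫ ^ 2 / ‖w j‖) (r := fun j => ⟪w i, w j⟫)
    (fun j _ => norm_nonneg _) (fun j _ => by positivity) (fun j _ => le_of_eq <| by
      by_cases h : w j = 0
      · simp [h]
      · have : ‖w j‖ ≠ 0 := norm_ne_zero_iff.mpr h
        field_simp)
  have hd : (⟪w i, w i⟫ : ℝ) ^ 2 / ‖w i‖ = ‖w i‖ ^ 3 := by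
    rw [real_inner_self_eq_norm_sq]
    by_cases h : w i = 0
    · simp [h]
    · have : ‖w i‖ ≠ 0 := norm_ne_zero_iff.mpr h
      field_simp
  rw [hd] at e2
  rw [real_inner_self_eq_norm_sq] at e0
  rw [hrow] at e0
  rw [← e1, ← e2]
  have : ∑ j ∈ Finset.univ.erase i, ⟪w i, w j⟫ = -‖w i‖ ^ 2 := by linarith
  rw [this] at cs
  nlinarith [cs]

/-- A centred tight frame with frame constant `K` and total squared norm `K * k` has total norm
at least `√(K * k * (k + 1))`. -/
lemma frame_sum_norm {ι E : Type*} [Fintype ι] [NormedAddCommGroup E]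
    [InnerProductSpace ℝ E] (w : ι → E) (K k : ℝ) (hK : 0 < K) (h0 : ∑ i, w i = 0)
    (hf : ∀ i, ∑ j, ⟪w i, w j⟫ ^ 2 = K * ‖w i‖ ^ 2) (ht : ∑ i, ‖w i‖ ^ 2 = K * k) :
    K * (k * (k + 1)) ≤ (∑ i, ‖w i‖) ^ 2 := by
  classical
  set S := ∑ i, ‖w i‖ with hS
  have hS0 : 0 ≤ S := Finset.sum_nonneg fun i _ => norm_nonneg _
  -- `‖w i‖ = ‖∑_{j ≠ i} w j‖ ≤ S - ‖w i‖`
  have hhalf : ∀ i, ‖w i‖ ≤ S - ‖w i‖ := by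
    intro i
    have e0 := Finset.add_sum_erase Finset.univ w (Finset.mem_univ i)
    have e1 := Finset.add_sum_erase Finset.univ (fun j => ‖w j‖) (Finset.mem_univ i)
    have hw : w i = -∑ j ∈ Finset.univ.erase i, w j := by
      rw [h0] at e0
      exact eq_neg_of_add_eq_zero_left e0
    have h2 := norm_sum_le (Finset.univ.erase i) w
    rw [← norm_neg, ← hw] at h2
    linarith
  have hnn : ∀ i, 0 ≤ S - ‖w i‖ := fun i => (norm_nonneg _).trans (hhalf i)
  rcases hS0.eq_or_lt with hz | hpos
  · have hw : ∀ i, ‖w i‖ = 0 := fun i => by linarith [hhalf i, norm_nonneg (w i)]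
    have : K * k = 0 := by rw [← ht]; simp [hw]
    rw [← mul_assoc, this, zero_mul]
    positivity
  have hrow : ∀ i, ‖w i‖ ^ 3 / (S - ‖w i‖) ≤ (∑ j, ⟪w i, w j⟫ ^ 2 / ‖w j‖) / S := by
    intro i
    have hp : 0 < S - ‖w i‖ := by
      rcases (norm_nonneg (w i)).eq_or_lt with h | h
      · linarith
      · linarith [hhalf i]
    rw [div_le_div_iff₀ hp hpos, mul_comm (∑ j, _)]
    exact frame_row w h0 i
  have hcol : ∑ i, ∑ j, ⟪w i, w j⟫ ^ 2 / ‖w j‖ = K * S := by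
    rw [Finset.sum_comm, hS, Finset.mul_sum]
    refine Finset.sum_congr rfl fun j _ => ?_
    rw [← Finset.sum_div]
    simp_rw [real_inner_comm (w j)]
    rw [hf j]
    by_cases h : w j = 0
    · simp [h]
    · have : ‖w j‖ ≠ 0 := norm_ne_zero_iff.mpr h
      field_simp
  have hsum : ∑ i, ‖w i‖ ^ 3 / (S - ‖w i‖) ≤ K := by
    refine (Finset.sum_le_sum fun i _ => hrow i).trans ?_
    rw [← Finset.sum_div, hcol, mul_div_assoc, div_self hpos.ne', mul_one]
  have cs := Finset.sum_sq_le_sum_mul_sum_of_sq_le_mul Finset.univ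
    (f := fun i => ‖w i‖ ^ 3 / (S - ‖w i‖)) (g := fun i => ‖w i‖ * (S - ‖w i‖))
    (r := fun i => ‖w i‖ ^ 2)
    (fun i _ => div_nonneg (by positivity) (hnn i))
    (fun i _ => mul_nonneg (norm_nonneg _) (hnn i)) (fun i _ => le_of_eq <| by
      by_cases h : w i = 0
      · simp [h]
      · have h1 : 0 < ‖w i‖ := norm_pos_iff.mpr h
        have : S - ‖w i‖ ≠ 0 := by linarith [hhalf i]
        field_simp)
  have hg : ∑ i, ‖w i‖ * (S - ‖w i‖) = S ^ 2 - K * k := by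
    simp_rw [mul_sub]
    rw [Finset.sum_sub_distrib, ← Finset.sum_mul, ← ht, ← hS, sq]
    simp_rw [sq]
  have hgn : 0 ≤ ∑ i, ‖w i‖ * (S - ‖w i‖) :=
    Finset.sum_nonneg fun i _ => mul_nonneg (norm_nonneg _) (hnn i)
  have h3 := cs.trans (mul_le_mul_of_nonneg_right hsum hgn)
  rw [ht, hg] at h3
  have h4 : K * (K * k ^ 2) ≤ K * (S ^ 2 - K * k) := by linarith
  have h5 := le_of_mul_le_mul_left h4 hK
  linarith

/-- Proposition 2 (upper bound): if a `k`-dimensional Euclidean ball of radius `r`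
(centred at `y`, spanned by the first `k` vectors of the orthonormal basis `v`)
is contained in the regular solid simplex
`T = {x : ⟪x, u i⟫ ≤ 1, 1 ≤ i ≤ n+1}` of internal radius `1`,
then `r ≤ √(n(n+1)/(k(k+1)))`. -/
theorem stmt_7 {n k : ℕ} (hn : 2 ≤ n) (hk1 : 1 ≤ k) (hkn : k ≤ n - 1)
    (u : Fin (n + 1) → EuclideanSpace ℝ (Fin n))
    (hu : ∀ i, ‖u i‖ = 1)
    (ha : ∑ i, u i = 0)
    (hb : ∀ x : EuclideanSpace ℝ (Fin n),
      ∑ i, (⟪u i, x⟫) • u i = ((n + 1 : ℝ) / n) • x)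
    (hangle : ∀ i j, i ≠ j → ⟪u i, u j⟫ = -(1 / (n : ℝ)))
    (y : EuclideanSpace ℝ (Fin n)) (r : ℝ) (hr : 0 < r)
    (v : OrthonormalBasis (Fin n) ℝ (EuclideanSpace ℝ (Fin n)))
    (hET : {x : EuclideanSpace ℝ (Fin n) |
        (∑ j ∈ Finset.univ.filter (fun j : Fin n => (j : ℕ) < k),
          ⟪x - y, v j⟫ ^ 2 ≤ r ^ 2) ∧
        ∀ j : Fin n, k ≤ (j : ℕ) → ⟪x - y, v j⟫ = 0} ⊆
      {x : EuclideanSpace ℝ (Fin n) | ∀ i, ⟪x, u i⟫ ≤ 1}) :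
    r ≤ Real.sqrt ((n * (n + 1)) / (k * (k + 1))) := by
  have hn0 : (0 : ℝ) < n := by exact_mod_cast (by omega : 0 < n)
  have hk0 : (0 : ℝ) < k := by exact_mod_cast hk1
  set F := Finset.univ.filter (fun j : Fin n => (j : ℕ) < k) with hF
  have hFcard : (F.card : ℝ) = k := by
    rw [hF, Fin.card_filter_val_lt, min_eq_right (by omega)]
  set w : Fin (n + 1) → EuclideanSpace ℝ (Fin n) :=
    fun i => ∑ l ∈ F, ⟪v l, u i⟫ • v l with hw
  have hwv : ∀ i j, ⟪w i, v j⟫ = if j ∈ F then ⟪v j, u i⟫ else 0 := by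
    intro i j
    simp [hw, sum_inner, real_inner_smul_left, v.inner_eq_ite]
  have hwu : ∀ i x, ⟪w i, x⟫ = ∑ l ∈ F, ⟪v l, u i⟫ * ⟪v l, x⟫ := by
    intro i x
    simp [hw, sum_inner, real_inner_smul_left]
  have hww : ∀ i j, ⟪w i, w j⟫ = ⟪u j, w i⟫ := by
    intro i j
    rw [real_inner_comm (w i), hwu, hwu]
    refine Finset.sum_congr rfl fun l hl => ?_
    rw [real_inner_comm (w j) (v l), hwv, if_pos hl]
  have hpars : ∀ x, ∑ i, ⟪u i, x⟫ ^ 2 = ((n + 1 : ℝ) / n) * ‖x‖ ^ 2 := by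
    intro x
    have := congrArg (fun z => ⟪z, x⟫) (hb x)
    simpa [sum_inner, real_inner_smul_left, ← sq] using this
  have hw0 : ∑ i, w i = 0 := by
    simp only [hw]
    rw [Finset.sum_comm]
    simp_rw [← Finset.sum_smul, ← inner_sum, ha]
    simp
  have hnsq : ∀ i, ‖w i‖ ^ 2 = ∑ l ∈ F, ⟪u i, v l⟫ ^ 2 := by
    intro i
    rw [← real_inner_self_eq_norm_sq, hww, real_inner_comm, hwu]
    simp_rw [real_inner_comm (u i), ← sq]
  have htr : ∑ i, ‖w i‖ ^ 2 = ((n + 1 : ℝ) / n) * k := by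
    simp_rw [hnsq]
    rw [Finset.sum_comm]
    simp_rw [hpars]
    simp [hFcard, mul_comm]
  have key := frame_sum_norm w ((n + 1 : ℝ) / n) k (by positivity) hw0
    (fun i => by simp_rw [hww]; exact hpars _) htr
  -- the point of the ball farthest in direction `u i`; for `w i = 0` it is the centre `y`
  have hcont : ∀ i, ⟪y, u i⟫ + r * ‖w i‖ ≤ 1 := by
    intro i
    have hmem : y + (r / ‖w i‖) • w i ∈ {x : EuclideanSpace ℝ (Fin n) |
        (∑ j ∈ F, ⟪x - y, v j⟫ ^ 2 ≤ r ^ 2) ∧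
        ∀ j : Fin n, k ≤ (j : ℕ) → ⟪x - y, v j⟫ = 0} := by
      refine ⟨?_, fun j hj => ?_⟩
      · have : ∑ j ∈ F, ⟪y + (r / ‖w i‖) • w i - y, v j⟫ ^ 2
            = (r / ‖w i‖) ^ 2 * ‖w i‖ ^ 2 := by
          rw [hnsq, Finset.mul_sum]
          refine Finset.sum_congr rfl fun j hj => ?_
          rw [add_sub_cancel_left, real_inner_smul_left, hwv, if_pos hj, mul_pow,
            real_inner_comm]
        rw [this]
        by_cases h : ‖w i‖ = 0
        · rw [h]; simp; positivity
        · rw [← mul_pow, div_mul_cancel₀ _ h]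
      · rw [add_sub_cancel_left, real_inner_smul_left, hwv, if_neg (by simp [hF, hj]), mul_zero]
    have h1 := hET hmem i
    rw [inner_add_left, real_inner_smul_left, real_inner_comm (u i) (w i), ← hww,
      real_inner_self_eq_norm_sq] at h1
    have h2 : r / ‖w i‖ * ‖w i‖ ^ 2 = r * ‖w i‖ := by
      by_cases h : ‖w i‖ = 0
      · simp [h]
      · field_simp
    linarith
  have hsum : r * ∑ i, ‖w i‖ ≤ n + 1 := by
    have := Finset.sum_le_sum fun i (_ : i ∈ Finset.univ) => hcont i
    rw [Finset.sum_add_distrib, ← inner_sum, ha, ← Finset.mul_sum] at this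
    simpa using this
  have hS0 : 0 ≤ ∑ i, ‖w i‖ := Finset.sum_nonneg fun i _ => norm_nonneg _
  apply Real.le_sqrt_of_sq_le
  rw [le_div_iff₀ (by positivity)]
  have h1 : (r * ∑ i, ‖w i‖) ^ 2 ≤ ((n : ℝ) + 1) ^ 2 :=
    pow_le_pow_left₀ (by positivity) hsum 2
  have h2 := mul_le_mul_of_nonneg_left key (sq_nonneg r)
  rw [mul_pow] at h1
  have h3 := h2.trans h1
  have h4 : r ^ 2 * ((n + 1 : ℝ) / n * (k * (k + 1)))
      = (n + 1) / n * (r ^ 2 * (k * (k + 1))) := by ring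
  have h5 : ((n : ℝ) + 1) ^ 2 = (n + 1) / n * (n * (n + 1)) := by field_simp
  rw [h4, h5] at h3
  exact le_of_mul_le_mul_left h3 (by positivity)
end

section
/- Let T ⊂ ℝ^n be a regular solid simplex of internal radius 1, given as T = {x ∈ ℝ^n : ⟨x, u_i⟩ ≤ 1, 1 ≤ i ≤ n+1} where the u_i satisfy the regular-simplex conditions, and let 1 ≤ k ≤ n−1. Then T contains a k-dimensional Euclidean ball of radius √(n(n+1)/(k(k+1))): there exist y ∈ ℝ^n and orthonormal vectors v_1,…,v_k in ℝ^n such that every point x = y + Σ_{j=1}^k t_j v_j with Σ_{j=1}^k t_j² ≤ n(n+1)/(k(k+1)) lies in T. -/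
open Finset RealInnerProductSpace

/-!
The ball is the inscribed ball of a `k`-dimensional face of the simplex. The vertices of `T` are
the points `-n u_i`. Fix a set `A` of `k + 1` indices; the corresponding face has centroid
`y = -(n/(k+1)) ∑_{i ∈ A} u_i`, and its direction space is the orthogonal complement `W` of the
`u_l` with `l ∉ A`, which has dimension at least `k`.

For `x ∈ W`, the numbers `⟪u_i, x⟫` with `i ∈ A` sum to `0` and their squares sum to
`((n+1)/n) ‖x‖²`, so Cauchy–Schwarz (`sq_le_of_sum_eq_zero`) gives
`⟪u_i, x⟫² ≤ (k/(k+1)) ((n+1)/n) ‖x‖² ≤ ((n+1)/(k+1))²` when `‖x‖² ≤ n(n+1)/(k(k+1))`.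
Since `⟪y, u_i⟫ = 1 - (n+1)/(k+1)` for `i ∈ A`, while `⟪y, u_l⟫ = 1` and `⟪x, u_l⟫ = 0` for
`l ∉ A`, the point `y + x` lies in `T`.
-/

/-- If `k + 1` reals sum to zero, each of them carries at most the fraction `k/(k+1)` of the sum
of their squares. -/
lemma sq_le_of_sum_eq_zero {ι : Type*} [DecidableEq ι] {k : ℕ} (A : Finset ι)
    (hA : #A = k + 1) (a : ι → ℝ) (h0 : ∑ i ∈ A, a i = 0) {i : ι} (hi : i ∈ A) :
    (k + 1) * a i ^ 2 ≤ k * ∑ j ∈ A, a j ^ 2 := by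
  have h1 := add_sum_erase A a hi
  have h2 := add_sum_erase A (fun j => a j ^ 2) hi
  have h3 := sq_sum_le_card_mul_sum_sq (s := A.erase i) (f := a)
  have hc : #(A.erase i) = k := by rw [card_erase_of_mem hi, hA]; rfl
  rw [hc] at h3
  have h4 : ∑ j ∈ A.erase i, a j = -a i := by linarith
  rw [h4] at h3
  rw [← h2]
  linarith

/-- The orthogonal complement of `n - k` vectors of `ℝⁿ` contains `k` orthonormal vectors. -/
lemma exists_orthonormal_orthogonal {n k : ℕ} {ι : Type*} (B : Finset ι)
    (hB : #B + k ≤ n) (u : ι → EuclideanSpace ℝ (Fin n)) :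
    ∃ v : Fin k → EuclideanSpace ℝ (Fin n), Orthonormal ℝ v ∧
      ∀ l ∈ B, ∀ j, ⟪u l, v j⟫ = 0 := by
  classical
  let K := Submodule.span ℝ ((B.image u : Finset _) : Set (EuclideanSpace ℝ (Fin n)))
  have hK : Module.finrank ℝ K ≤ #B := (finrank_span_finset_le_card _).trans card_image_le
  have hsum := K.finrank_add_finrank_orthogonal
  rw [finrank_euclideanSpace_fin] at hsum
  have hle : k ≤ Module.finrank ℝ Kᗮ := by omega
  let b := stdOrthonormalBasis ℝ Kᗮ
  refine ⟨fun j => (b (Fin.castLE hle j) : EuclideanSpace ℝ (Fin n)), ?_, fun l hl j => ?_⟩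
  · exact (b.orthonormal.comp_linearIsometry Kᗮ.subtypeₗᵢ).comp _ (Fin.castLE_injective hle)
  · refine (Submodule.mem_orthogonal _ _).1 (b (Fin.castLE hle j)).2 _ (Submodule.subset_span ?_)
    exact mem_coe.2 (mem_image_of_mem u hl)

/-- Proposition 2 (attainment): the regular solid simplex
`T = {x : ⟪x, u i⟫ ≤ 1, 1 ≤ i ≤ n+1}` of internal radius `1` contains a
`k`-dimensional Euclidean ball of radius `√(n(n+1)/(k(k+1)))`. -/
theorem stmt_8 {n k : ℕ} (hn : 2 ≤ n) (hk1 : 1 ≤ k) (hkn : k ≤ n - 1)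
    (u : Fin (n + 1) → EuclideanSpace ℝ (Fin n))
    (hu : ∀ i, ‖u i‖ = 1)
    (ha : ∑ i, u i = 0)
    (hb : ∀ x : EuclideanSpace ℝ (Fin n),
      ∑ i, (⟪u i, x⟫) • u i = ((n + 1 : ℝ) / n) • x)
    (hangle : ∀ i j, i ≠ j → ⟪u i, u j⟫ = -(1 / (n : ℝ))) :
    ∃ (y : EuclideanSpace ℝ (Fin n)) (v : Fin k → EuclideanSpace ℝ (Fin n)),
      Orthonormal ℝ v ∧
      ∀ t : Fin k → ℝ, ∑ j, t j ^ 2 ≤ (n * (n + 1)) / (k * (k + 1)) →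
        ∀ i, ⟪y + ∑ j, t j • v j, u i⟫ ≤ 1 := by
  classical
  have hn0 : (0 : ℝ) < n := by exact_mod_cast (by omega : 0 < n)
  have hk0 : (0 : ℝ) < k := by exact_mod_cast (by omega : 0 < k)
  obtain ⟨A, -, hA⟩ := exists_subset_card_eq (s := (univ : Finset (Fin (n + 1)))) (n := k + 1)
    (by simp; omega)
  have hAc : #Aᶜ + k ≤ n := by
    rw [card_compl, hA, Fintype.card_fin]; omega
  obtain ⟨v, hv, hvB⟩ := exists_orthonormal_orthogonal Aᶜ hAc u
  refine ⟨-((n : ℝ) / (k + 1)) • ∑ i ∈ A, u i, v, hv, fun t ht i => ?_⟩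
  set x := ∑ j, t j • v j with hx
  have hxB : ∀ l ∉ A, ⟪u l, x⟫ = 0 := fun l hl => by
    rw [hx, inner_sum]
    exact sum_eq_zero fun j _ => by
      rw [real_inner_smul_right, hvB l (mem_compl.2 hl) j, mul_zero]
  have hxx : ⟪x, x⟫ = ∑ j, t j ^ 2 := by
    rw [hx, hv.inner_sum]
    simp [sq]
  have hsum0 : ∑ l ∈ A, ⟪u l, x⟫ = 0 := by
    rw [sum_subset (subset_univ A) fun l _ hl => hxB l hl, ← sum_inner, ha, inner_zero_left]
  have hsumsq : ∑ l ∈ A, ⟪u l, x⟫ ^ 2 = (n + 1) / n * ⟪x, x⟫ := by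
    rw [sum_subset (subset_univ A) fun l _ hl => by rw [hxB l hl]; norm_num,
      ← real_inner_smul_left, ← hb x, sum_inner]
    exact sum_congr rfl fun l _ => by rw [real_inner_smul_left, sq]
  rw [inner_add_left, real_inner_smul_left, sum_inner, real_inner_comm (u i) x]
  by_cases hi : i ∈ A
  · have hy : ∑ l ∈ A, ⟪u l, u i⟫ = 1 - k / n := by
      rw [← add_sum_erase A _ hi, real_inner_self_eq_norm_sq, hu,
        sum_congr rfl fun l hl => hangle l i (ne_of_mem_erase hl), sum_const,
        card_erase_of_mem hi, hA]
      simp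
      ring
    have h1 := sq_le_of_sum_eq_zero A hA (fun l => ⟪u l, x⟫) hsum0 hi
    rw [hsumsq, hxx] at h1
    have h2 : k * ((n + 1) / n * ∑ j, t j ^ 2)
        ≤ k * ((n + 1) / n * ((n * (n + 1)) / (k * (k + 1)) : ℝ)) := by gcongr
    have h3 : k * ((n + 1) / n * ((n * (n + 1)) / (k * (k + 1)) : ℝ))
        = (k + 1) * ((n + 1) / (k + 1)) ^ 2 := by field_simp
    have h4 : ⟪u i, x⟫ ^ 2 ≤ ((n + 1) / (k + 1) : ℝ) ^ 2 :=
      le_of_mul_le_mul_left ((h1.trans h2).trans_eq h3) (by positivity)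
    have h5 : ⟪u i, x⟫ ≤ (n + 1) / (k + 1) := (abs_le_of_sq_le_sq' h4 (by positivity)).2
    have h6 : -((n : ℝ) / (k + 1)) * (1 - k / n) = 1 - (n + 1) / (k + 1) := by
      field_simp
      ring
    rw [hy, h6]
    linarith
  · rw [hxB i hi, sum_congr rfl fun l hl => hangle l i (ne_of_mem_of_not_mem hl hi), sum_const, hA]
    apply le_of_eq
    push_cast [nsmul_eq_mul]
    field_simp
    ring
end

section
/- Let x_1,…,x_m be vectors in a Euclidean space with Σ_{i=1}^m x_i = 0, and let u_1,…,u_m be unit vectors in the same space. Then (Σ_{i=1}^m ⟨x_i, u_i⟩)² ≤ Σ_{i=1}^m Σ_{j=1}^m ‖x_i‖ · ‖x_j‖ · (1 − ⟨u_i, u_j⟩). -/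
/-!
Put `a i = ‖x i‖`, `A = ∑ a i` and `S = ∑ a i • u i`; the right-hand side is `A² - ‖S‖²`.
As `∑ x i = 0`, the `u i` may be recentred at their weighted mean `S / A` without changing
`∑ ⟪x i, u i⟫`; Cauchy–Schwarz with weights `a i` then bounds the square by `A` times the
weighted variance of the `u i`, which is `A - ‖S‖² / A`. To avoid division, the proof works with
`A • u i - S` in place of `u i - S / A`, so that both sides are multiplied by `A²`.
-/

open Finset RealInnerProductSpace

/-- Lemma 5: if `∑ i, x i = 0` and the `u i` are unit vectors, then
`(∑ i, ⟪x i, u i⟫)² ≤ ∑ i j, ‖x i‖ ‖x j‖ (1 - ⟪u i, u j⟫)`. -/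
theorem stmt_10 {E : Type*} [NormedAddCommGroup E] [InnerProductSpace ℝ E]
    [FiniteDimensional ℝ E] {m : ℕ} (hm : 1 ≤ m)
    (x u : Fin m → E) (hx : ∑ i, x i = 0) (hu : ∀ i, ‖u i‖ = 1) :
    (∑ i, ⟪x i, u i⟫) ^ 2 ≤
      ∑ i, ∑ j, ‖x i‖ * ‖x j‖ * (1 - ⟪u i, u j⟫) := by
  obtain ⟨A, hA⟩ : ∃ A, A = ∑ i, ‖x i‖ := ⟨_, rfl⟩
  obtain ⟨S, hS⟩ : ∃ S, S = ∑ i, ‖x i‖ • u i := ⟨_, rfl⟩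
  have hSS : ∑ i, ‖x i‖ * ⟪u i, S⟫ = ‖S‖ ^ 2 := by
    rw [← real_inner_self_eq_norm_sq]
    conv_rhs => rw [hS, sum_inner, ← hS]
    simp [real_inner_smul_left]
  have hR : ∑ i, ∑ j, ‖x i‖ * ‖x j‖ * (1 - ⟪u i, u j⟫) = A ^ 2 - ‖S‖ ^ 2 := by
    rw [← hSS, sq A]
    nth_rewrite 1 [hA]
    rw [Finset.sum_mul, ← Finset.sum_sub_distrib]
    refine Finset.sum_congr rfl fun i _ => ?_
    rw [hA, hS, inner_sum, Finset.mul_sum, Finset.mul_sum, ← Finset.sum_sub_distrib]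
    refine Finset.sum_congr rfl fun j _ => ?_
    rw [real_inner_smul_right]
    ring
  have hL : ∑ i, ⟪x i, A • u i - S⟫ = A * ∑ i, ⟪x i, u i⟫ := by
    simp only [inner_sub_right, real_inner_smul_right, Finset.sum_sub_distrib,
      ← Finset.mul_sum, ← sum_inner, hx, inner_zero_left, sub_zero]
  have hV : ∑ i, ‖x i‖ * ‖A • u i - S‖ ^ 2 = A * (A ^ 2 - ‖S‖ ^ 2) := by
    have h : ∀ i, ‖x i‖ * ‖A • u i - S‖ ^ 2
        = ‖x i‖ * (A ^ 2 + ‖S‖ ^ 2) - 2 * A * (‖x i‖ * ⟪u i, S⟫) := by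
      intro i
      rw [norm_sub_sq_real, norm_smul, hu, real_inner_smul_left, mul_one, Real.norm_eq_abs,
        sq_abs]
      ring
    simp only [h, Finset.sum_sub_distrib, ← Finset.mul_sum, ← Finset.sum_mul, ← hA, hSS]
    ring
  have hCS : (∑ i, ⟪x i, A • u i - S⟫) ^ 2 ≤
      (∑ i, ‖x i‖) * ∑ i, ‖x i‖ * ‖A • u i - S‖ ^ 2 := by
    refine Finset.sum_sq_le_sum_mul_sum_of_sq_le_mul _ (fun i _ => norm_nonneg _)
      (fun i _ => by positivity) fun i _ => ?_
    have h := sq_le_sq' (neg_le_of_abs_le (abs_real_inner_le_norm (x i) (A • u i - S)))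
      (real_inner_le_norm (x i) (A • u i - S))
    linarith
  rw [hL, hV, ← hA] at hCS
  rw [hR]
  have hA0 : 0 ≤ A := hA ▸ Finset.sum_nonneg fun i _ => norm_nonneg _
  rcases hA0.eq_or_lt with h0 | h0
  · -- If `A = 0`, then every `x i` vanishes and both sides are zero.
    have hz : ∀ i, x i = 0 := fun i => by
      have := (Finset.sum_eq_zero_iff_of_nonneg fun i _ => norm_nonneg (x i)).1
        (hA.symm.trans h0.symm) i (Finset.mem_univ i)
      simpa using this
    simp [hS, hz, ← h0]
  · refine le_of_mul_le_mul_left ?_ (pow_pos h0 2)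
    linarith
end

section
/- Suppose the unit vectors u_1,…,u_m and positive weights c_1,…,c_m satisfy John's conditions, and let K = {x ∈ ℝ^n : ⟨x, u_i⟩ ≤ 1 for all i}. Let 1 ≤ k ≤ n, and let E be the k-dimensional ellipsoid {x ∈ ℝ^n : Σ_{j=1}^k α_j^{-2} ⟨x−y, v_j⟩² ≤ 1, and ⟨x−y, v_j⟩ = 0 for k+1 ≤ j ≤ n}, for some y ∈ ℝ^n, orthonormal basis (v_j)_{j=1}^n of ℝ^n and positive reals (α_j)_{j=1}^k. If E ⊆ K, then (∏_{j=1}^k α_j)^{1/k} ≤ √(n(n+1)/(k(k+1))); i.e. the k-dimensional volume of E is at most that of a k-dimensional Euclidean ball of radius √(n(n+1)/(k(k+1))). -/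
/-!
Put `w i = 1 - ⟪y, u i⟫`, `S = ∑ j, α j` and `Y = ‖y‖ ^ 2`, and let `P` be the orthogonal projection
onto the span of the first `k` vectors `v j` and `A` the linear map with `A (v j) = α j • v j` there.
Since `y + A e ∈ K` for every `e` in the unit ball of that span, `⟪A e, u i⟫ ≤ w i * ‖e‖`
(`support_bound`). John's conditions give `S = ∑ i, c i * ⟪A (P (u i) + q), u i⟫` for every fixed `q`
in the span, hence `S ≤ ∑ i, c i * w i * ‖P (u i) + q‖` (`sum_axes_le`). Two choices of `q` are used,
each followed by Cauchy–Schwarz.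

* `q = 0`, with `∑ c i * w i ^ 2 = n + Y` and `∑ c i * ‖P (u i)‖ ^ 2 = k`: `S ^ 2 ≤ k * (n + Y)`.
* `q = P y / n`, with `‖P (u i + y / n)‖ ≤ ‖u i + y / n‖`, `∑ c i * w i = n` and
  `∑ c i * w i * ‖u i + y / n‖ ^ 2 = n - Y / n`: `S ^ 2 ≤ n ^ 2 - Y`.

Adding the first inequality to `k` times the second eliminates `Y` and gives
`(k + 1) * S ^ 2 ≤ k * n * (n + 1)`; the arithmetic-geometric mean inequality concludes.
-/

open Finset RealInnerProductSpace

section John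

variable {n m k : ℕ} {u : Fin m → EuclideanSpace ℝ (Fin n)} {c : Fin m → ℝ}

lemma john_sum_inner (ha : ∑ i, c i • u i = 0) (x : EuclideanSpace ℝ (Fin n)) :
    ∑ i, c i * ⟪u i, x⟫ = 0 := by
  have h := congrArg (fun z => ⟪z, x⟫) ha
  simpa [sum_inner, real_inner_smul_left] using h

lemma john_sum_inner_sq
    (hb : ∀ x : EuclideanSpace ℝ (Fin n), ∑ i, (c i * ⟪u i, x⟫) • u i = x)
    (x : EuclideanSpace ℝ (Fin n)) :
    ∑ i, c i * ⟪u i, x⟫ ^ 2 = ‖x‖ ^ 2 := by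
  have h := congrArg (fun z => ⟪z, x⟫) (hb x)
  simp only [sum_inner, real_inner_smul_left, real_inner_self_eq_norm_sq] at h
  rw [← h]
  exact Finset.sum_congr rfl fun i _ => by ring

/-- Taking traces in the decomposition of the identity. -/
lemma john_sum_weights (hu : ∀ i, ‖u i‖ = 1)
    (hb : ∀ x : EuclideanSpace ℝ (Fin n), ∑ i, (c i * ⟪u i, x⟫) • u i = x)
    (v : OrthonormalBasis (Fin n) ℝ (EuclideanSpace ℝ (Fin n))) :
    ∑ i, c i = n := by
  calc ∑ i, c i = ∑ i, ∑ j, c i * ⟪u i, v j⟫ ^ 2 := by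
        refine Finset.sum_congr rfl fun i _ => ?_
        rw [← Finset.mul_sum, v.sum_sq_inner_left, hu i]
        ring
    _ = ∑ j, ∑ i, c i * ⟪u i, v j⟫ ^ 2 := Finset.sum_comm
    _ = n := by simp [john_sum_inner_sq hb]

/-- Bessel's inequality for the first `k` vectors of an orthonormal basis. -/
lemma bessel_castLE (hkn : k ≤ n)
    (v : OrthonormalBasis (Fin n) ℝ (EuclideanSpace ℝ (Fin n)))
    (x : EuclideanSpace ℝ (Fin n)) :
    ∑ j : Fin k, ⟪x, v (Fin.castLE hkn j)⟫ ^ 2 ≤ ‖x‖ ^ 2 := by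
  rw [← v.sum_sq_inner_left x]
  calc ∑ j : Fin k, ⟪x, v (Fin.castLE hkn j)⟫ ^ 2
      = ∑ j ∈ Finset.univ.map (Fin.castLEEmb hkn), ⟪x, v j⟫ ^ 2 := by
        rw [Finset.sum_map]
        rfl
    _ ≤ _ := Finset.sum_le_sum_of_subset_of_nonneg (Finset.subset_univ _)
        fun _ _ _ => sq_nonneg _

/-- The ellipsoid lies in the half-space `⟪x, u₀⟫ ≤ 1`, expressed through its support function and
homogenized; `e` lists the coordinates of a vector in the span of the first `k` basis vectors. -/
lemma support_bound (hkn : k ≤ n) (y u₀ : EuclideanSpace ℝ (Fin n))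
    (v : OrthonormalBasis (Fin n) ℝ (EuclideanSpace ℝ (Fin n)))
    (α : Fin k → ℝ) (hα : ∀ j, 0 < α j)
    (hE : ∀ x : EuclideanSpace ℝ (Fin n),
      (∑ j : Fin k, ((α j) ^ 2)⁻¹ * ⟪x - y, v (Fin.castLE hkn j)⟫ ^ 2 ≤ 1) →
      (∀ j : Fin n, k ≤ (j : ℕ) → ⟪x - y, v j⟫ = 0) → ⟪x, u₀⟫ ≤ 1)
    (e : Fin k → ℝ) :
    ∑ j, α j * ⟪u₀, v (Fin.castLE hkn j)⟫ * e j ≤ (1 - ⟪u₀, y⟫) * √(∑ j, e j ^ 2) := by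
  have hnn : 0 ≤ ∑ j, e j ^ 2 := Finset.sum_nonneg fun _ _ => sq_nonneg _
  rcases hnn.eq_or_lt with h0 | hpos
  · have he : ∀ j, e j = 0 := by
      intro j
      have := (Finset.sum_eq_zero_iff_of_nonneg (fun j _ => sq_nonneg (e j))).1 h0.symm j
        (Finset.mem_univ j)
      exact pow_eq_zero_iff two_ne_zero |>.1 this
    simp [he]
  · set N := √(∑ j, e j ^ 2) with hN
    have hNpos : 0 < N := Real.sqrt_pos.2 hpos
    have hN2 : N ^ 2 = ∑ j, e j ^ 2 := Real.sq_sqrt hnn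
    have key := hE (y + ∑ j, (α j * e j / N) • v (Fin.castLE hkn j)) ?_ ?_
    · rw [inner_add_left, sum_inner, real_inner_comm] at key
      have h2 : ∑ j, α j * ⟪u₀, v (Fin.castLE hkn j)⟫ * e j
          = N * ∑ j, ⟪(α j * e j / N) • v (Fin.castLE hkn j), u₀⟫ := by
        rw [Finset.mul_sum]
        refine Finset.sum_congr rfl fun j _ => ?_
        rw [real_inner_smul_left, real_inner_comm]
        field_simp
      rw [h2]
      nlinarith
    · have hcoord : ∀ j : Fin k, ⟪y + ∑ l, (α l * e l / N) • v (Fin.castLE hkn l) - y,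
          v (Fin.castLE hkn j)⟫ = α j * e j / N := by
        intro j
        rw [add_sub_cancel_left, sum_inner]
        simp [real_inner_smul_left, v.inner_eq_ite]
      apply le_of_eq
      calc _ = ∑ j, e j ^ 2 / N ^ 2 := by
            refine Finset.sum_congr rfl fun j _ => ?_
            rw [hcoord j]
            have := (hα j).ne'
            field_simp
        _ = 1 := by
            rw [← Finset.sum_div, ← hN2]
            exact div_self (by positivity)
    · intro j hj
      rw [add_sub_cancel_left, sum_inner]
      refine Finset.sum_eq_zero fun l _ => ?_
      have : Fin.castLE hkn l ≠ j := by
        intro h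
        have := congrArg Fin.val h
        simp at this
        omega
      simp [real_inner_smul_left, v.inner_eq_ite, this]

/-- The sum of the semi-axes is computed as the trace `∑ i, c i * ⟪A (u i), P (u i)⟫`; adding a
constant vector (with coordinates `b`) to `P (u i)` does not change it because `∑ i, c i • u i = 0`. -/
lemma sum_axes_le (hkn : k ≤ n) (hc : ∀ i, 0 < c i)
    (ha : ∑ i, c i • u i = 0)
    (hb : ∀ x : EuclideanSpace ℝ (Fin n), ∑ i, (c i * ⟪u i, x⟫) • u i = x)
    (y : EuclideanSpace ℝ (Fin n))
    (v : OrthonormalBasis (Fin n) ℝ (EuclideanSpace ℝ (Fin n)))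
    (α : Fin k → ℝ)
    (hs : ∀ (i : Fin m) (e : Fin k → ℝ),
      ∑ j, α j * ⟪u i, v (Fin.castLE hkn j)⟫ * e j ≤ (1 - ⟪u i, y⟫) * √(∑ j, e j ^ 2))
    (b : Fin k → ℝ) :
    ∑ j, α j ≤ ∑ i, c i * ((1 - ⟪u i, y⟫) *
      √(∑ j, (⟪u i, v (Fin.castLE hkn j)⟫ + b j) ^ 2)) := by
  calc ∑ j, α j
      = ∑ j, ∑ i, c i * (α j * ⟪u i, v (Fin.castLE hkn j)⟫ *
          (⟪u i, v (Fin.castLE hkn j)⟫ + b j)) := by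
        refine Finset.sum_congr rfl fun j _ => ?_
        have h1 := john_sum_inner_sq hb (v (Fin.castLE hkn j))
        have h2 := john_sum_inner ha (v (Fin.castLE hkn j))
        rw [v.norm_eq_one] at h1
        calc α j = α j * ∑ i, c i * ⟪u i, v (Fin.castLE hkn j)⟫ ^ 2
              + α j * b j * ∑ i, c i * ⟪u i, v (Fin.castLE hkn j)⟫ := by rw [h1, h2]; ring
          _ = _ := by
            rw [Finset.mul_sum, Finset.mul_sum, ← Finset.sum_add_distrib]
            exact Finset.sum_congr rfl fun i _ => by ring
    _ = ∑ i, c i * ∑ j, α j * ⟪u i, v (Fin.castLE hkn j)⟫ *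
          (⟪u i, v (Fin.castLE hkn j)⟫ + b j) := by
        rw [Finset.sum_comm]
        exact Finset.sum_congr rfl fun i _ => (Finset.mul_sum _ _ _).symm
    _ ≤ _ := Finset.sum_le_sum fun i _ => mul_le_mul_of_nonneg_left (hs i _) (hc i).le

end John

/-- Proposition 4: under John's conditions, a `k`-dimensional ellipsoid contained
in `K = {x : ⟪x, u i⟫ ≤ 1 ∀ i}` has `k`-dimensional volume at most that of a
`k`-dimensional ball of radius `√(n(n+1)/(k(k+1)))`; equivalently, the geometric
mean of its semi-axes satisfies `(∏ j, α j)^(1/k) ≤ √(n(n+1)/(k(k+1)))`. -/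
theorem stmt_11 {n m k : ℕ} (hn : 1 ≤ n) (hm : 1 ≤ m) (hk1 : 1 ≤ k) (hkn : k ≤ n)
    (u : Fin m → EuclideanSpace ℝ (Fin n)) (c : Fin m → ℝ)
    (hu : ∀ i, ‖u i‖ = 1) (hc : ∀ i, 0 < c i)
    (ha : ∑ i, c i • u i = 0)
    (hb : ∀ x : EuclideanSpace ℝ (Fin n), ∑ i, (c i * ⟪u i, x⟫) • u i = x)
    (y : EuclideanSpace ℝ (Fin n))
    (v : OrthonormalBasis (Fin n) ℝ (EuclideanSpace ℝ (Fin n)))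
    (α : Fin k → ℝ) (hα : ∀ j, 0 < α j)
    (hEK : {x : EuclideanSpace ℝ (Fin n) |
        (∑ j : Fin k, ((α j) ^ 2)⁻¹ * ⟪x - y, v (Fin.castLE hkn j)⟫ ^ 2 ≤ 1) ∧
        ∀ j : Fin n, k ≤ (j : ℕ) → ⟪x - y, v j⟫ = 0} ⊆
      {x : EuclideanSpace ℝ (Fin n) | ∀ i, ⟪x, u i⟫ ≤ 1}) :
    (∏ j, α j) ^ ((1 : ℝ) / k) ≤ Real.sqrt ((n * (n + 1)) / (k * (k + 1))) := by
  have hs : ∀ (i : Fin m) (e : Fin k → ℝ),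
      ∑ j, α j * ⟪u i, v (Fin.castLE hkn j)⟫ * e j ≤ (1 - ⟪u i, y⟫) * √(∑ j, e j ^ 2) :=
    fun i e => support_bound hkn y (u i) v α hα (fun x h1 h2 => hEK ⟨h1, h2⟩ i) e
  have hw : ∀ i, 0 ≤ 1 - ⟪u i, y⟫ := by
    intro i
    have : y ∈ {x : EuclideanSpace ℝ (Fin n) | ∀ i, ⟪x, u i⟫ ≤ 1} := hEK (by simp)
    have := this i
    rw [real_inner_comm] at this
    linarith
  have hn0 : (0 : ℝ) < n := by exact_mod_cast hn
  have hk0 : (0 : ℝ) < k := by exact_mod_cast hk1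
  have hS0 : 0 ≤ ∑ j, α j := Finset.sum_nonneg fun j _ => (hα j).le
  have hcn := john_sum_weights hu hb v
  have hy1 := john_sum_inner ha y
  have hy2 := john_sum_inner_sq hb y
  have bound1 : (∑ j, α j) ^ 2 ≤ k * (n + ‖y‖ ^ 2) := by
    have h := sum_axes_le hkn hc ha hb y v α hs (fun _ => 0)
    simp only [add_zero] at h
    have hw2 : ∑ i, c i * (1 - ⟪u i, y⟫) ^ 2 = n + ‖y‖ ^ 2 := by
      calc _ = ∑ i, c i - 2 * ∑ i, c i * ⟪u i, y⟫ + ∑ i, c i * ⟪u i, y⟫ ^ 2 := by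
            rw [Finset.mul_sum, ← Finset.sum_sub_distrib, ← Finset.sum_add_distrib]
            exact Finset.sum_congr rfl fun i _ => by ring
        _ = _ := by rw [hcn, hy1, hy2]; ring
    have hP : ∑ i, c i * ∑ j : Fin k, ⟪u i, v (Fin.castLE hkn j)⟫ ^ 2 = k := by
      simp only [Finset.mul_sum]
      rw [Finset.sum_comm]
      simp [john_sum_inner_sq hb]
    calc (∑ j, α j) ^ 2 ≤ _ := pow_le_pow_left₀ hS0 h 2
      _ ≤ (∑ i, c i * ∑ j : Fin k, ⟪u i, v (Fin.castLE hkn j)⟫ ^ 2) *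
          ∑ i, c i * (1 - ⟪u i, y⟫) ^ 2 := by
        have hq : ∀ i, 0 ≤ ∑ j : Fin k, ⟪u i, v (Fin.castLE hkn j)⟫ ^ 2 :=
          fun i => Finset.sum_nonneg fun _ _ => sq_nonneg _
        refine Finset.sum_sq_le_sum_mul_sum_of_sq_le_mul _
          (fun i _ => mul_nonneg (hc i).le (hq i))
          (fun i _ => mul_nonneg (hc i).le (sq_nonneg _)) fun i _ => le_of_eq ?_
        rw [mul_pow, mul_pow, Real.sq_sqrt (hq i)]
        ring
      _ = _ := by rw [hP, hw2]
  have bound2 : (∑ j, α j) ^ 2 ≤ n ^ 2 - ‖y‖ ^ 2 := by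
    have h := sum_axes_le hkn hc ha hb y v α hs
      (fun j => ⟪(n : ℝ)⁻¹ • y, v (Fin.castLE hkn j)⟫)
    have h' : ∑ j, α j ≤ ∑ i, c i * ((1 - ⟪u i, y⟫) * ‖u i + (n : ℝ)⁻¹ • y‖) := by
      refine h.trans (Finset.sum_le_sum fun i _ => mul_le_mul_of_nonneg_left
        (mul_le_mul_of_nonneg_left ?_ (hw i)) (hc i).le)
      simp only [← inner_add_left]
      exact (Real.sqrt_le_left (norm_nonneg _)).2 (bessel_castLE hkn v _)
    have hw1 : ∑ i, c i * (1 - ⟪u i, y⟫) = n := by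
      simp only [mul_sub, mul_one, Finset.sum_sub_distrib]
      rw [hcn, hy1, sub_zero]
    have hw3 : ∑ i, c i * (1 - ⟪u i, y⟫) * ‖u i + (n : ℝ)⁻¹ • y‖ ^ 2 = n - ‖y‖ ^ 2 / n := by
      calc _ = ∑ i, c i * (1 - ⟪u i, y⟫) * (1 + ‖y‖ ^ 2 / n ^ 2)
              + 2 / n * ∑ i, c i * ⟪u i, y⟫ - 2 / n * ∑ i, c i * ⟪u i, y⟫ ^ 2 := by
            rw [Finset.mul_sum, Finset.mul_sum, ← Finset.sum_add_distrib,
              ← Finset.sum_sub_distrib]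
            refine Finset.sum_congr rfl fun i _ => ?_
            rw [norm_add_sq_real, hu i, norm_smul, real_inner_smul_right, mul_pow,
              Real.norm_eq_abs, sq_abs]
            field_simp
            ring
        _ = _ := by
            rw [← Finset.sum_mul, hw1, hy1, hy2]
            field_simp
            ring
    calc (∑ j, α j) ^ 2 ≤ _ := pow_le_pow_left₀ hS0 h' 2
      _ ≤ (∑ i, c i * (1 - ⟪u i, y⟫)) *
          ∑ i, c i * (1 - ⟪u i, y⟫) * ‖u i + (n : ℝ)⁻¹ • y‖ ^ 2 := by
        refine Finset.sum_sq_le_sum_mul_sum_of_sq_le_mul _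
          (fun i _ => mul_nonneg (hc i).le (hw i))
          (fun i _ => mul_nonneg (mul_nonneg (hc i).le (hw i)) (sq_nonneg _))
          fun i _ => le_of_eq (by ring)
      _ = _ := by
        rw [hw1, hw3]
        field_simp
  have amgm : (∏ j, α j) ^ ((1 : ℝ) / k) ≤ (∑ j, α j) / k := by
    have h := Real.geom_mean_le_arith_mean Finset.univ (fun _ => (1 : ℝ)) α
      (fun _ _ => zero_le_one) (by simpa using hk0) (fun j _ => (hα j).le)
    simpa using h
  refine amgm.trans (Real.le_sqrt_of_sq_le ?_)
  rw [div_pow, div_le_div_iff₀ (by positivity) (by positivity)]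
  have hsum : (k + 1) * (∑ j, α j) ^ 2 ≤ k * (n * (n + 1)) := by nlinarith
  nlinarith [mul_le_mul_of_nonneg_left hsum hk0.le]
end

section
/- Suppose the unit vectors u_1,…,u_m and positive weights c_1,…,c_m satisfy John's conditions, and let K = {x ∈ ℝ^n : ⟨x, u_i⟩ ≤ 1 for all i}. Let 1 ≤ k ≤ n, and let E be the k-dimensional ellipsoid {x ∈ ℝ^n : Σ_{j=1}^k α_j^{-2} ⟨x−y, v_j⟩² ≤ 1, and ⟨x−y, v_j⟩ = 0 for k+1 ≤ j ≤ n}, for some y ∈ ℝ^n, orthonormal basis (v_j)_{j=1}^n of ℝ^n and positive reals (α_j)_{j=1}^k. If E ⊆ K, then Σ_{j=1}^k α_j ≤ √(k n (n+1)/(k+1)). -/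
open Finset RealInnerProductSpace

/-!
Write `S = ∑ α j`, let `P` be the orthogonal projection onto the span of the `v j` with `j < k`,
and let `A` be the linear map with `A (v j) = α j • v j` for `j < k` and `A (v j) = 0` otherwise,
so that `E = y + A B` with `B` the unit ball. The inclusion `E ⊆ K` says that
`⟪A (u i), τ⟫ ≤ μ * (1 - ⟪y, u i⟫)` whenever `‖τ‖ ≤ μ` (`support_le`). This is tested twice.

* With `τ = A (u i)` it gives `‖A (u i)‖ ≤ 1 - ⟪y, u i⟫`; squaring, summing with the weights `c i`
  and using Cauchy-Schwarz, `S² ≤ k ∑ α j² ≤ k (n + ‖y‖²)`.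
* With `Λ = √(S² + ‖y‖²)`, `μ = Λ + ⟪y, u i⟫` and `τ = S • P (u i + Λ⁻¹ • y)`, the bound `‖τ‖ ≤ μ`
  holds because `μ² - S² ‖u i + Λ⁻¹ • y‖² = (⟪y, u i⟫ + ‖y‖² / Λ)²`. Summing with the weights `c i`
  gives `S² ≤ n Λ - ‖y‖²`, that is `Λ² ≤ n Λ`, hence `S² + ‖y‖² ≤ n²`.

Adding the second bound to `1 / k` times the first eliminates `‖y‖` and gives
`S² (k + 1) / k ≤ n (n + 1)`.
-/

/-- The support function bound expressing `E ⊆ K` for one constraint vector `w`: if the ellipsoid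
lies in the half-space `⟪x, w⟫ ≤ 1`, then `⟪A w, τ⟫ ≤ μ (1 - ⟪y, w⟫)` for all `‖τ‖ ≤ μ`. -/
lemma support_le {n k : ℕ} (hkn : k ≤ n)
    (y w : EuclideanSpace ℝ (Fin n))
    (v : OrthonormalBasis (Fin n) ℝ (EuclideanSpace ℝ (Fin n)))
    (α : Fin k → ℝ) (hα : ∀ j, 0 < α j)
    (hE : ∀ x : EuclideanSpace ℝ (Fin n),
        (∑ j : Fin k, ((α j) ^ 2)⁻¹ * ⟪x - y, v (Fin.castLE hkn j)⟫ ^ 2 ≤ 1) →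
        (∀ j : Fin n, k ≤ (j : ℕ) → ⟪x - y, v j⟫ = 0) → ⟪x, w⟫ ≤ 1)
    (τ : Fin k → ℝ) (μ : ℝ) (hμ : 0 ≤ μ) (hτ : ∑ j, τ j ^ 2 ≤ μ ^ 2) :
    ∑ j, α j * ⟪v (Fin.castLE hkn j), w⟫ * τ j ≤ μ * (1 - ⟪y, w⟫) := by
  rcases hμ.eq_or_lt with h0 | hpos
  · subst h0
    have hz : ∀ j, τ j = 0 := by
      intro j
      have h1 : τ j ^ 2 ≤ ∑ j, τ j ^ 2 :=
        Finset.single_le_sum (f := fun j => τ j ^ 2) (fun j _ => sq_nonneg (τ j))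
          (Finset.mem_univ j)
      have h2 : τ j ^ 2 ≤ 0 := by linarith
      exact pow_eq_zero_iff two_ne_zero |>.mp (le_antisymm h2 (sq_nonneg _))
    simp [hz]
  · set d : EuclideanSpace ℝ (Fin n) :=
      ∑ j : Fin k, (α j * τ j / μ) • v (Fin.castLE hkn j) with hd
    have hin : ∀ j : Fin k, ⟪d, v (Fin.castLE hkn j)⟫ = α j * τ j / μ := by
      intro j
      simp only [hd, sum_inner, real_inner_smul_left, v.inner_eq_ite]
      simp [Fin.castLE_inj]
    have hout : ∀ j : Fin n, k ≤ (j : ℕ) → ⟪d, v j⟫ = 0 := by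
      intro j hj
      simp only [hd, sum_inner, real_inner_smul_left, v.inner_eq_ite]
      refine Finset.sum_eq_zero fun l _ => ?_
      have : Fin.castLE hkn l ≠ j := by
        intro h
        have h' := congrArg Fin.val h
        have := l.2
        simp at h'
        omega
      simp [this]
    have h := hE (y + d) (by
      simp only [add_sub_cancel_left, hin]
      have : ∀ j, (α j ^ 2)⁻¹ * (α j * τ j / μ) ^ 2 = τ j ^ 2 / μ ^ 2 := by
        intro j
        have := (hα j).ne'
        field_simp
      simp only [this]
      rw [← Finset.sum_div]
      exact (div_le_one (by positivity)).2 hτ) (by simpa using hout)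
    rw [inner_add_left] at h
    have hdw : μ * ⟪d, w⟫ = ∑ j, α j * ⟪v (Fin.castLE hkn j), w⟫ * τ j := by
      simp only [hd, sum_inner, real_inner_smul_left, Finset.mul_sum]
      refine Finset.sum_congr rfl fun j _ => ?_
      field_simp
    rw [← hdw]
    nlinarith

/-- Bessel's inequality for the first `k` members of an orthonormal basis. -/
lemma sum_castLE_sq_le {n k : ℕ} (hkn : k ≤ n)
    (v : OrthonormalBasis (Fin n) ℝ (EuclideanSpace ℝ (Fin n))) (x : EuclideanSpace ℝ (Fin n)) :
    ∑ j : Fin k, ⟪v (Fin.castLE hkn j), x⟫ ^ 2 ≤ ‖x‖ ^ 2 := by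
  have ho : Orthonormal ℝ (fun j : Fin k => v (Fin.castLE hkn j)) :=
    v.orthonormal.comp _ (Fin.castLE_injective hkn)
  have h := ho.sum_inner_products_le x (s := Finset.univ)
  simpa using h

/-- Proposition 4 (arithmetic-mean form): under John's conditions, the semi-axes
of a `k`-dimensional ellipsoid contained in `K` satisfy
`∑ j, α j ≤ √(k n (n+1)/(k+1))`. -/
theorem stmt_12 {n m k : ℕ} (hn : 1 ≤ n) (hm : 1 ≤ m) (hk1 : 1 ≤ k) (hkn : k ≤ n)
    (u : Fin m → EuclideanSpace ℝ (Fin n)) (c : Fin m → ℝ)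
    (hu : ∀ i, ‖u i‖ = 1) (hc : ∀ i, 0 < c i)
    (ha : ∑ i, c i • u i = 0)
    (hb : ∀ x : EuclideanSpace ℝ (Fin n), ∑ i, (c i * ⟪u i, x⟫) • u i = x)
    (y : EuclideanSpace ℝ (Fin n))
    (v : OrthonormalBasis (Fin n) ℝ (EuclideanSpace ℝ (Fin n)))
    (α : Fin k → ℝ) (hα : ∀ j, 0 < α j)
    (hEK : {x : EuclideanSpace ℝ (Fin n) |
        (∑ j : Fin k, ((α j) ^ 2)⁻¹ * ⟪x - y, v (Fin.castLE hkn j)⟫ ^ 2 ≤ 1) ∧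
        ∀ j : Fin n, k ≤ (j : ℕ) → ⟪x - y, v j⟫ = 0} ⊆
      {x : EuclideanSpace ℝ (Fin n) | ∀ i, ⟪x, u i⟫ ≤ 1}) :
    ∑ j, α j ≤ Real.sqrt ((k * n * (n + 1)) / (k + 1)) := by
  -- John's conditions in scalar form.
  have hb2 : ∀ x x' : EuclideanSpace ℝ (Fin n), ∑ i, c i * (⟪x, u i⟫ * ⟪x', u i⟫) = ⟪x, x'⟫ := by
    intro x x'
    conv_rhs => rw [← hb x]
    rw [sum_inner]
    refine Finset.sum_congr rfl fun i _ => ?_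
    rw [real_inner_smul_left, real_inner_comm x (u i), real_inner_comm x' (u i)]
    ring
  have ha2 : ∀ x : EuclideanSpace ℝ (Fin n), ∑ i, c i * ⟪x, u i⟫ = 0 := by
    intro x
    have := congrArg (fun z => ⟪x, z⟫) ha
    simpa [inner_sum, real_inner_smul_right] using this
  -- Taking traces in the decomposition of the identity.
  have hcn : ∑ i, c i = n := by
    have h1 : ∀ i, c i = ∑ j, c i * (⟪v j, u i⟫ * ⟪v j, u i⟫) := by
      intro i
      rw [← Finset.mul_sum]
      have := v.sum_sq_norm_inner_right (u i)
      simp only [Real.norm_eq_abs, sq_abs, hu i] at this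
      simp only [← sq, this]
      simp
    rw [Finset.sum_congr rfl fun i _ => h1 i, Finset.sum_comm]
    simp [hb2]
  have hsup := fun i => support_le hkn y (u i) v α hα (fun x h1 h2 => hEK ⟨h1, h2⟩ i)
  set S := ∑ j, α j with hS
  have : Nonempty (Fin k) := ⟨⟨0, hk1⟩⟩
  have hSpos : 0 < S := Finset.sum_pos (fun j _ => hα j) Finset.univ_nonempty
  clear_value S
  set Y := ‖y‖ with hY
  have hYY : ⟪y, y⟫ = Y ^ 2 := real_inner_self_eq_norm_sq y
  have hvv : ∀ j, ⟪v j, v j⟫ = (1 : ℝ) := by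
    intro j
    simp
  have first : S ^ 2 ≤ k * (n + Y ^ 2) := by
    have hw : ∀ i, ∑ j, α j ^ 2 * (⟪v (Fin.castLE hkn j), u i⟫ * ⟪v (Fin.castLE hkn j), u i⟫)
        ≤ (1 - ⟪y, u i⟫) ^ 2 := by
      intro i
      set W := ∑ j, α j ^ 2 * (⟪v (Fin.castLE hkn j), u i⟫ * ⟪v (Fin.castLE hkn j), u i⟫) with hW
      have hW0 : 0 ≤ W := Finset.sum_nonneg fun j _ =>
        mul_nonneg (sq_nonneg _) (mul_self_nonneg _)
      have h1 := hsup i (fun j => α j * ⟪v (Fin.castLE hkn j), u i⟫) (√W) (Real.sqrt_nonneg _) (by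
        rw [Real.sq_sqrt hW0, hW]
        exact (Finset.sum_congr rfl fun j _ => by ring).le)
      have h2 : ∑ j, α j * ⟪v (Fin.castLE hkn j), u i⟫ * (α j * ⟪v (Fin.castLE hkn j), u i⟫) = W :=
        Finset.sum_congr rfl fun j _ => by ring
      rw [h2] at h1
      have h3 := Real.sq_sqrt hW0
      have h4 := Real.sqrt_nonneg W
      nlinarith [sq_nonneg (√W - (1 - ⟪y, u i⟫))]
    have h1 : ∑ j, α j ^ 2 ≤ n + Y ^ 2 := by
      calc ∑ j, α j ^ 2
          = ∑ i, c i * ∑ j, α j ^ 2 *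
              (⟪v (Fin.castLE hkn j), u i⟫ * ⟪v (Fin.castLE hkn j), u i⟫) := by
            simp only [Finset.mul_sum]
            rw [Finset.sum_comm]
            refine Finset.sum_congr rfl fun j _ => ?_
            have := hb2 (v (Fin.castLE hkn j)) (v (Fin.castLE hkn j))
            rw [hvv] at this
            calc α j ^ 2 = α j ^ 2 * ∑ i, c i *
                  (⟪v (Fin.castLE hkn j), u i⟫ * ⟪v (Fin.castLE hkn j), u i⟫) := by
                  rw [this, mul_one]
              _ = _ := by
                  rw [Finset.mul_sum]
                  exact Finset.sum_congr rfl fun i _ => by ring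
        _ ≤ ∑ i, c i * (1 - ⟪y, u i⟫) ^ 2 :=
            Finset.sum_le_sum fun i _ => mul_le_mul_of_nonneg_left (hw i) (hc i).le
        _ = ∑ i, c i - 2 * ∑ i, c i * ⟪y, u i⟫ + ∑ i, c i * (⟪y, u i⟫ * ⟪y, u i⟫) := by
            rw [Finset.mul_sum, ← Finset.sum_sub_distrib, ← Finset.sum_add_distrib]
            exact Finset.sum_congr rfl fun i _ => by ring
        _ = n + Y ^ 2 := by
            rw [hcn, ha2, hb2, hYY]
            ring
    have h2 : S ^ 2 ≤ k * ∑ j, α j ^ 2 := by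
      simpa [hS] using sq_sum_le_card_mul_sum_sq (s := Finset.univ) (f := α)
    exact h2.trans (mul_le_mul_of_nonneg_left h1 (Nat.cast_nonneg k))
  have second : S ^ 2 + Y ^ 2 ≤ (n : ℝ) ^ 2 := by
    set L := √(S ^ 2 + Y ^ 2) with hL
    have hLsq : L ^ 2 = S ^ 2 + Y ^ 2 := Real.sq_sqrt (by positivity)
    have hLpos : 0 < L := Real.sqrt_pos.2 (by positivity)
    have hY0 : 0 ≤ Y := norm_nonneg y
    have hYL : Y ≤ L := Real.le_sqrt_of_sq_le (by nlinarith)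
    have hi : ∀ i, ∑ j, α j * ⟪v (Fin.castLE hkn j), u i⟫ *
        (S * ⟪v (Fin.castLE hkn j), u i + L⁻¹ • y⟫) ≤ (L + ⟪y, u i⟫) * (1 - ⟪y, u i⟫) := by
      intro i
      apply hsup i
      · have h := abs_real_inner_le_norm y (u i)
        rw [hu i, mul_one] at h
        linarith [(abs_le.1 h).1]
      · have hB := sum_castLE_sq_le hkn v (u i + L⁻¹ • y)
        have hN : ‖u i + L⁻¹ • y‖ ^ 2 = 1 + 2 * (L⁻¹ * ⟪y, u i⟫) + L⁻¹ ^ 2 * Y ^ 2 := by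
          rw [norm_add_sq_real, hu i, real_inner_smul_right, norm_smul, mul_pow,
            real_inner_comm y (u i)]
          simp [hY]
        have hid : (L + ⟪y, u i⟫) ^ 2 - S ^ 2 * ‖u i + L⁻¹ • y‖ ^ 2
            = (⟪y, u i⟫ + Y ^ 2 / L) ^ 2 := by
          have hS2 : S ^ 2 = L ^ 2 - Y ^ 2 := by linarith
          rw [hN, hS2]
          field_simp
          ring
        simp only [mul_pow]
        rw [← Finset.mul_sum]
        nlinarith [mul_le_mul_of_nonneg_left hB (sq_nonneg S), sq_nonneg (⟪y, u i⟫ + Y ^ 2 / L)]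
    have hsum := Finset.sum_le_sum fun i (_ : i ∈ Finset.univ) =>
      mul_le_mul_of_nonneg_left (hi i) (hc i).le
    have hl : ∑ i, c i * ∑ j, α j * ⟪v (Fin.castLE hkn j), u i⟫ *
        (S * ⟪v (Fin.castLE hkn j), u i + L⁻¹ • y⟫) = S ^ 2 := by
      simp only [Finset.mul_sum]
      rw [Finset.sum_comm, sq]
      have hSS : S * S = ∑ j, α j * S := by rw [← Finset.sum_mul, ← hS]
      rw [hSS]
      refine Finset.sum_congr rfl fun j _ => ?_
      have e1 := hb2 (v (Fin.castLE hkn j)) (v (Fin.castLE hkn j))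
      have e2 := ha2 (v (Fin.castLE hkn j))
      rw [hvv] at e1
      calc _ = α j * S * ∑ i, c i * (⟪v (Fin.castLE hkn j), u i⟫ * ⟪v (Fin.castLE hkn j), u i⟫)
            + α j * S * (L⁻¹ * ⟪v (Fin.castLE hkn j), y⟫) *
              ∑ i, c i * ⟪v (Fin.castLE hkn j), u i⟫ := by
            rw [Finset.mul_sum, Finset.mul_sum, ← Finset.sum_add_distrib]
            refine Finset.sum_congr rfl fun i _ => ?_
            rw [inner_add_right, real_inner_smul_right]
            ring
        _ = α j * S := by
            rw [e1, e2]
            ring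
    have hr : ∑ i, c i * ((L + ⟪y, u i⟫) * (1 - ⟪y, u i⟫)) = n * L - Y ^ 2 := by
      calc _ = L * ∑ i, c i + (1 - L) * ∑ i, c i * ⟪y, u i⟫
            - ∑ i, c i * (⟪y, u i⟫ * ⟪y, u i⟫) := by
            rw [Finset.mul_sum, Finset.mul_sum, ← Finset.sum_add_distrib, ← Finset.sum_sub_distrib]
            exact Finset.sum_congr rfl fun i _ => by ring
        _ = n * L - Y ^ 2 := by
            rw [hcn, ha2, hb2, hYY]
            ring
    rw [hl, hr] at hsum
    have hLn : L ≤ n := by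
      by_contra hcon
      push Not at hcon
      nlinarith
    rw [← hLsq]
    exact pow_le_pow_left₀ hLpos.le hLn 2
  apply Real.le_sqrt_of_sq_le
  rw [le_div_iff₀ (by positivity)]
  have hk0 : (0 : ℝ) ≤ k := Nat.cast_nonneg k
  nlinarith [mul_le_mul_of_nonneg_left second hk0]
end

section
/- Suppose the unit vectors u_1,…,u_m and positive weights c_1,…,c_m satisfy John's conditions. Let 1 ≤ k ≤ n, let (v_j)_{j=1}^n be an orthonormal basis of ℝ^n, let α_1,…,α_k be positive reals, let y ∈ ℝ^n, and assume that for every i: ⟨u_i, y⟩ + (Σ_{j=1}^k α_j² ⟨u_i, v_j⟩²)^{1/2} ≤ 1. Then (Σ_{j=1}^k α_j)² ≤ n² − ‖y‖². -/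
/-!
Write `A = ∑ j, α j • v j ⊗ v j`, `S = ∑ j, α j = tr A`, and `y = ‖y‖ • e` with `e` a unit vector. The
claim `S² + ‖y‖² ≤ n²` is equivalent to the family of linear inequalities
`C * S + s * ‖y‖ ≤ n` with `C, s ≥ 0` and `C² + s² = 1` (`john_linear_bound`).

For a unit vector `u`, the vector `z(u) = C • u + ((1 - C) * ⟪u, e⟫ + s) • e` has norm exactly
`1 + s * ⟪u, e⟫` (`norm_john_test`). The hypothesis `‖A u i‖ ≤ 1 - ⟪u i, y⟫` and
Cauchy-Schwarz therefore give `⟪A u i, z(u i)⟫ ≤ (1 - ⟪u i, y⟫) * (1 + s * ⟪u i, e⟫)`. Averaging with the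
weights `c i`, John's conditions turn the right side into `n - s * ‖y‖` and the left side into
`C * tr A + (1 - C) * ⟪A e, e⟫ ≥ C * S`.
-/

open Finset RealInnerProductSpace

/-- The test vector attached to a unit vector `u`: its norm is an affine function of `u`. -/
lemma norm_john_test {E : Type*} [NormedAddCommGroup E] [InnerProductSpace ℝ E]
    {u e : E} (hu : ‖u‖ = 1) (he : ‖e‖ = 1) {C s : ℝ} (hs : 0 ≤ s) (hs1 : s ≤ 1)
    (hCs : C ^ 2 + s ^ 2 = 1) :
    ‖C • u + ((1 - C) * ⟪u, e⟫ + s) • e‖ = 1 + s * ⟪u, e⟫ := by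
  have hue : |⟪u, e⟫| ≤ 1 := by
    simpa [hu, he] using abs_real_inner_le_norm u e
  have hpos : 0 ≤ 1 + s * ⟪u, e⟫ := by
    nlinarith [(abs_le.mp hue).1]
  refine (sq_eq_sq₀ (norm_nonneg _) hpos).mp ?_
  rw [norm_add_sq_real, norm_smul, norm_smul, hu, he, real_inner_smul_left, real_inner_smul_right,
    mul_one, mul_one, Real.norm_eq_abs, Real.norm_eq_abs, sq_abs, sq_abs]
  linear_combination (1 - ⟪u, e⟫ ^ 2) * hCs

/-- The bound `C * tr A + s * ‖y‖ ≤ n`, in a direction `(C, s)` of the unit quarter circle. The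
operator `A` has eigenvalues `α j` on the orthonormal family `w`, and `y = r • e`. -/
lemma john_linear_bound {n m k : ℕ}
    (u : Fin m → EuclideanSpace ℝ (Fin n)) (c : Fin m → ℝ)
    (hu : ∀ i, ‖u i‖ = 1) (hc : ∀ i, 0 < c i)
    (ha : ∑ i, c i • u i = 0)
    (hb : ∀ x : EuclideanSpace ℝ (Fin n), ∑ i, (c i * ⟪u i, x⟫) • u i = x)
    (e : EuclideanSpace ℝ (Fin n)) (he : ‖e‖ = 1) (r : ℝ)
    (w : Fin k → EuclideanSpace ℝ (Fin n)) (hw : Orthonormal ℝ w)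
    (α : Fin k → ℝ) (hα : ∀ j, 0 < α j)
    (htouch : ∀ i, ⟪u i, r • e⟫ + Real.sqrt (∑ j, (α j) ^ 2 * ⟪u i, w j⟫ ^ 2) ≤ 1)
    {C s : ℝ} (hC : 0 ≤ C) (hs : 0 ≤ s) (hCs : C ^ 2 + s ^ 2 = 1) :
    C * ∑ j, α j + s * r ≤ n := by
  have hs1 : s ≤ 1 := by nlinarith
  have hC1 : C ≤ 1 := by nlinarith
  have J1 : ∀ x, ∑ i, c i * ⟪u i, x⟫ = 0 := by
    intro x
    have := congrArg (fun t => ⟪t, x⟫) ha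
    simpa [sum_inner, real_inner_smul_left] using this
  have J2 : ∀ x z, ∑ i, c i * (⟪u i, x⟫ * ⟪u i, z⟫) = ⟪x, z⟫ := by
    intro x z
    have := congrArg (fun t => ⟪t, z⟫) (hb x)
    simpa [sum_inner, real_inner_smul_left, mul_assoc] using this
  -- Taking traces in the decomposition of the identity.
  have J0 : ∑ i, c i = n := by
    let b := EuclideanSpace.basisFun (Fin n) ℝ
    have h1 : ∀ i, c i = ∑ j, c i * (⟪u i, b j⟫ * ⟪u i, b j⟫) := by
      intro i
      have h2 : ∑ j, ⟪u i, b j⟫ * ⟪u i, b j⟫ = 1 := by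
        have := b.sum_inner_mul_inner (u i) (u i)
        simpa [real_inner_comm, hu i] using this
      rw [← Finset.mul_sum, h2, mul_one]
    rw [Finset.sum_congr rfl fun i _ => h1 i, Finset.sum_comm]
    simp [J2]
  have hpt : ∀ i, ∑ j, α j * ⟪u i, w j⟫ *
        ⟪C • u i + ((1 - C) * ⟪u i, e⟫ + s) • e, w j⟫ ≤
      (1 - r * ⟪u i, e⟫) * (1 + s * ⟪u i, e⟫) := by
    intro i
    set z := C • u i + ((1 - C) * ⟪u i, e⟫ + s) • e with hz
    have hzn : ‖z‖ = 1 + s * ⟪u i, e⟫ := norm_john_test (hu i) he hs hs1 hCs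
    have hbes : Real.sqrt (∑ j, ⟪z, w j⟫ ^ 2) ≤ ‖z‖ := by
      refine Real.sqrt_le_iff.mpr ⟨norm_nonneg _, ?_⟩
      have := hw.sum_inner_products_le (s := Finset.univ) z
      simpa [real_inner_comm] using this
    have ht := htouch i
    rw [real_inner_smul_right] at ht
    have hcs := Real.sum_mul_le_sqrt_mul_sqrt Finset.univ
      (fun j => α j * ⟪u i, w j⟫) (fun j => ⟪z, w j⟫)
    simp only [mul_pow] at hcs
    rw [← hzn]
    refine hcs.trans ?_
    exact mul_le_mul (by linarith) hbes (Real.sqrt_nonneg _)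
      (by linarith [Real.sqrt_nonneg (∑ j, (α j) ^ 2 * ⟪u i, w j⟫ ^ 2)])
  have hsum := Finset.sum_le_sum fun i (_ : i ∈ Finset.univ) =>
    mul_le_mul_of_nonneg_left (hpt i) (hc i).le
  have hR : ∑ i, c i * ((1 - r * ⟪u i, e⟫) * (1 + s * ⟪u i, e⟫)) = n - s * r := by
    have h : ∀ i, c i * ((1 - r * ⟪u i, e⟫) * (1 + s * ⟪u i, e⟫)) =
        c i + (s - r) * (c i * ⟪u i, e⟫) - s * r * (c i * (⟪u i, e⟫ * ⟪u i, e⟫)) :=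
      fun i => by ring
    simp_rw [h]
    rw [Finset.sum_sub_distrib, Finset.sum_add_distrib, ← Finset.mul_sum, ← Finset.mul_sum,
      J0, J1, J2, real_inner_self_eq_norm_sq, he]
    ring
  have hL : ∑ i, c i * ∑ j, α j * ⟪u i, w j⟫ *
        ⟪C • u i + ((1 - C) * ⟪u i, e⟫ + s) • e, w j⟫ =
      ∑ j, α j * (C + (1 - C) * ⟪e, w j⟫ ^ 2) := by
    simp_rw [Finset.mul_sum]
    rw [Finset.sum_comm]
    refine Finset.sum_congr rfl fun j _ => ?_
    have h : ∀ i, c i * (α j * ⟪u i, w j⟫ *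
          ⟪C • u i + ((1 - C) * ⟪u i, e⟫ + s) • e, w j⟫) =
        α j * C * (c i * (⟪u i, w j⟫ * ⟪u i, w j⟫)) +
        α j * (1 - C) * ⟪e, w j⟫ * (c i * (⟪u i, e⟫ * ⟪u i, w j⟫)) +
        α j * s * ⟪e, w j⟫ * (c i * ⟪u i, w j⟫) := by
      intro i
      rw [inner_add_left, real_inner_smul_left, real_inner_smul_left]
      ring
    simp_rw [h]
    rw [Finset.sum_add_distrib, Finset.sum_add_distrib, ← Finset.mul_sum, ← Finset.mul_sum,
      ← Finset.mul_sum, J1, J2, J2, real_inner_self_eq_norm_sq, hw.1 j]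
    ring
  rw [hL, hR] at hsum
  have hS : C * ∑ j, α j ≤ ∑ j, α j * (C + (1 - C) * ⟪e, w j⟫ ^ 2) := by
    rw [Finset.mul_sum]
    refine Finset.sum_le_sum fun j _ => ?_
    have : 0 ≤ α j * ((1 - C) * ⟪e, w j⟫ ^ 2) :=
      mul_nonneg (hα j).le (mul_nonneg (by linarith) (sq_nonneg _))
    linarith
  linarith

/-- Inequality (12) of Proposition 4: under John's conditions, if
`⟪u i, y⟫ + √(∑ j, α j² ⟪u i, v j⟫²) ≤ 1` for every `i`, then
`(∑ j, α j)² ≤ n² − ‖y‖²`. -/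
theorem stmt_14 {n m k : ℕ} (hn : 1 ≤ n) (hm : 1 ≤ m) (hk1 : 1 ≤ k) (hkn : k ≤ n)
    (u : Fin m → EuclideanSpace ℝ (Fin n)) (c : Fin m → ℝ)
    (hu : ∀ i, ‖u i‖ = 1) (hc : ∀ i, 0 < c i)
    (ha : ∑ i, c i • u i = 0)
    (hb : ∀ x : EuclideanSpace ℝ (Fin n), ∑ i, (c i * ⟪u i, x⟫) • u i = x)
    (y : EuclideanSpace ℝ (Fin n))
    (v : OrthonormalBasis (Fin n) ℝ (EuclideanSpace ℝ (Fin n)))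
    (α : Fin k → ℝ) (hα : ∀ j, 0 < α j)
    (htouch : ∀ i, ⟪u i, y⟫ +
      Real.sqrt (∑ j : Fin k, (α j) ^ 2 * ⟪u i, v (Fin.castLE hkn j)⟫ ^ 2) ≤ 1) :
    (∑ j, α j) ^ 2 ≤ (n : ℝ) ^ 2 - ‖y‖ ^ 2 := by
  have hS : 0 < ∑ j, α j :=
    Finset.sum_pos (fun j _ => hα j) ⟨⟨0, hk1⟩, Finset.mem_univ _⟩
  -- Any unit vector serves as the direction of `y = 0`.
  obtain ⟨e, he, hy⟩ : ∃ e : EuclideanSpace ℝ (Fin n), ‖e‖ = 1 ∧ ‖y‖ • e = y := by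
    by_cases h : y = 0
    · exact ⟨v ⟨0, hn⟩, v.orthonormal.1 _, by simp [h]⟩
    · have hne : ‖y‖ ≠ 0 := norm_ne_zero_iff.mpr h
      exact ⟨‖y‖⁻¹ • y, by simp [norm_smul, hne], by simp [smul_smul, hne]⟩
  have hw : Orthonormal ℝ fun j : Fin k => v (Fin.castLE hkn j) :=
    v.orthonormal.comp _ (Fin.castLE_injective hkn)
  set S := ∑ j, α j with hSdef
  set R := Real.sqrt (S ^ 2 + ‖y‖ ^ 2) with hRdef
  have hR2 : R ^ 2 = S ^ 2 + ‖y‖ ^ 2 := Real.sq_sqrt (by positivity)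
  have hR : 0 < R := Real.sqrt_pos.mpr (by positivity)
  -- The optimal direction is that of the vector `(S, ‖y‖)`.
  have key := john_linear_bound u c hu hc ha hb e he ‖y‖ _ hw α hα
    (fun i => by rw [hy]; exact htouch i) (C := S / R) (s := ‖y‖ / R)
    (by positivity) (by positivity)
    (by rw [div_pow, div_pow, ← add_div, ← hR2, div_self (by positivity)])
  have hle : R ≤ n := by
    have h : S / R * S + ‖y‖ / R * ‖y‖ = R := by
      field_simp
      linarith
    rwa [← hSdef, h] at key
  nlinarith
end

section
/- Suppose the unit vectors u_1,…,u_m and positive weights c_1,…,c_m satisfy John's conditions, and let K = {x ∈ ℝ^n : ⟨x, u_i⟩ ≤ 1 for all i}. Then for all x, y ∈ K, one has n + ⟨x, y⟩ ≥ 0. -/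
/-!
Every `c i * (1 - ⟪x, u i⟫) * (1 - ⟪y, u i⟫)` is nonnegative for `x, y ∈ K`. Summing over `i`, the
linear terms vanish because `∑ c i • u i = 0`, the quadratic term is `⟪x, y⟫` by the decomposition
of the identity, and the constant term is `∑ c i = n`, the trace of that decomposition
(`sum_weights_eq_dim`).
-/

open Finset RealInnerProductSpace

/-- Under John's conditions, any two points `x, y` of
`K = {x : ⟪x, u i⟫ ≤ 1 ∀ i}` satisfy `n + ⟪x, y⟫ ≥ 0`. -/
theorem stmt_15 {n m : ℕ} (hn : 1 ≤ n) (hm : 1 ≤ m)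
    (u : Fin m → EuclideanSpace ℝ (Fin n)) (c : Fin m → ℝ)
    (hu : ∀ i, ‖u i‖ = 1) (hc : ∀ i, 0 < c i)
    (ha : ∑ i, c i • u i = 0)
    (hb : ∀ x : EuclideanSpace ℝ (Fin n), ∑ i, (c i * ⟪u i, x⟫) • u i = x)
    (x y : EuclideanSpace ℝ (Fin n))
    (hx : ∀ i, ⟪x, u i⟫ ≤ 1) (hy : ∀ i, ⟪y, u i⟫ ≤ 1) :
    0 ≤ n + ⟪x, y⟫ := by
  have hlin : ∀ z : EuclideanSpace ℝ (Fin n), ∑ i, c i * ⟪z, u i⟫ = 0 := by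
    intro z
    have h := congrArg (fun w => ⟪z, w⟫) ha
    simpa only [inner_sum, inner_smul_right, inner_zero_right] using h
  have hquad : ∑ i, c i * ⟪x, u i⟫ * ⟪y, u i⟫ = ⟪x, y⟫ := by
    have h := congrArg (fun w => ⟪x, w⟫) (hb y)
    simp only [inner_sum, inner_smul_right] at h
    rw [← h]
    refine Finset.sum_congr rfl fun i _ => ?_
    rw [real_inner_comm y (u i)]
    ring
  have hnonneg : 0 ≤ ∑ i, c i * ((1 - ⟪x, u i⟫) * (1 - ⟪y, u i⟫)) :=
    Finset.sum_nonneg fun i _ => mul_nonneg (hc i).le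
      (mul_nonneg (sub_nonneg.2 (hx i)) (sub_nonneg.2 (hy i)))
  have hexpand : ∑ i, c i * ((1 - ⟪x, u i⟫) * (1 - ⟪y, u i⟫)) =
      ∑ i, c i - ∑ i, c i * ⟪x, u i⟫ - ∑ i, c i * ⟪y, u i⟫
        + ∑ i, c i * ⟪x, u i⟫ * ⟪y, u i⟫ := by
    rw [← Finset.sum_sub_distrib, ← Finset.sum_sub_distrib, ← Finset.sum_add_distrib]
    exact Finset.sum_congr rfl fun i _ => by ring
  rw [hexpand, hlin, hlin, hquad, sum_weights_eq_dim u c hu hb] at hnonneg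
  simpa using hnonneg
end
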